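/- arXiv:0711.0600 — 5 statements merged into one kernel-verified Lean document; each statement's English description precedes it below -/
import Mathlib

section
/- Inside Λ∧ one has Λ ∩ (l−ψ)Λ∧ = (l−ψ)Λ: a power series x ∈ Λ lies in the image of Λ∧ under l−ψ if and only if it lies in the image of Λ under l−ψ. -/
/-!
If `y ∈ Λ∧` and `l y - ψ y ∈ Λ`, then already `y ∈ Λ`; as `ψ` preserves `Λ`, this gives both
inclusions. Write `g = (1 + T) ^ l - 1`, so that `ψ (∑ y_m T^m) = ∑ y_m g^m`.

The point is that `g⁻¹` has degree at most `-l`, i.e. no coefficient above `T^(-l)`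
(`coeff_inv_eq_zero`): `g` is monic of degree `l` with all other coefficients divisible by `l`, so
comparing coefficients in `g g⁻¹ = 1` shows that each coefficient of `g⁻¹` in a degree `> -l` is
`l` times a combination of other such coefficients. These are therefore divisible by every power
of `l`, hence zero. Consequently `g^m` has degree at most `l m` for `m < 0`
(`coeff_pow_eq_zero_of_gt`), whereas `g^m ∈ Λ` for `m ≥ 0`.

Now take `k < 0` such that `y_m = 0` for `k < m < 0`. Every term of
`C k (ψ y) = ∑ y_m C k (g^m)` vanishes: for `m ≥ 0` since `g^m ∈ Λ`, for `k < m < 0` since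
`y_m = 0`, and for `m ≤ k` since `k > l k ≥ l m`. Hence `0 = C k (l y - ψ y) = l y_k`, so
`y_k = 0`; descending induction on `k` concludes.
-/

open Filter

set_option linter.unusedVariables false

section Coefficients

variable {l : ℕ} [Fact (Nat.Prime l)] {R : Type} [CommRing R] {C : ℤ → R →+ ℤ_[l]}

lemma coeff_mul_eq_zero_of_lt
    (hmul : ∀ x y : R, ∀ k, C k (x * y) = ∑' i : ℤ, C i x * C (k - i) y) {x y : R}
    (hx : ∀ k < 0, C k x = 0) (hy : ∀ k < 0, C k y = 0) (k : ℤ) (hk : k < 0) :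
    C k (x * y) = 0 := by
  rw [hmul]
  refine (tsum_congr fun i => ?_).trans tsum_zero
  rcases lt_or_ge i 0 with hi | hi
  · rw [hx i hi, zero_mul]
  · rw [hy (k - i) (by omega), mul_zero]

lemma coeff_pow_eq_zero_of_lt
    (hmul : ∀ x y : R, ∀ k, C k (x * y) = ∑' i : ℤ, C i x * C (k - i) y)
    (hone : ∀ k, C k 1 = if k = 0 then 1 else 0) {x : R}
    (hx : ∀ k < 0, C k x = 0) (n : ℕ) : ∀ k < 0, C k (x ^ n) = 0 := by
  induction n with
  | zero => intro k hk; rw [pow_zero, hone, if_neg hk.ne]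
  | succ n ih => rw [pow_succ]; exact coeff_mul_eq_zero_of_lt hmul ih hx

lemma coeff_mul_eq_zero_of_gt
    (hmul : ∀ x y : R, ∀ k, C k (x * y) = ∑' i : ℤ, C i x * C (k - i) y) {x y : R} {a b : ℤ}
    (hx : ∀ k > a, C k x = 0) (hy : ∀ k > b, C k y = 0) (k : ℤ) (hk : k > a + b) :
    C k (x * y) = 0 := by
  rw [hmul]
  refine (tsum_congr fun i => ?_).trans tsum_zero
  rcases lt_or_ge a i with hi | hi
  · rw [hx i hi, zero_mul]
  · rw [hy (k - i) (by omega), mul_zero]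

lemma coeff_pow_eq_zero_of_gt
    (hmul : ∀ x y : R, ∀ k, C k (x * y) = ∑' i : ℤ, C i x * C (k - i) y)
    (hone : ∀ k, C k 1 = if k = 0 then 1 else 0) {x : R} {a : ℤ}
    (hx : ∀ k > a, C k x = 0) (n : ℕ) : ∀ k > n * a, C k (x ^ n) = 0 := by
  induction n with
  | zero =>
    intro k hk
    rw [Nat.cast_zero, zero_mul] at hk
    rw [pow_zero, hone, if_neg hk.ne']
  | succ n ih =>
    intro k hk
    rw [pow_succ]
    refine coeff_mul_eq_zero_of_gt hmul ih hx k ?_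
    push_cast at hk
    linarith

lemma coeff_T_pow_mul
    (hmul : ∀ x y : R, ∀ k, C k (x * y) = ∑' i : ℤ, C i x * C (k - i) y) {T : R}
    (hT : ∀ k, C k T = if k = 1 then 1 else 0) (n : ℕ) (x : R) :
    ∀ k, C k (T ^ n * x) = C (k - n) x := by
  induction n with
  | zero => simp
  | succ n ih =>
    intro k
    rw [pow_succ', mul_assoc, hmul, tsum_eq_single 1 fun i hi => by rw [hT, if_neg hi, zero_mul],
      hT, if_pos rfl, one_mul, ih]
    congr 1
    push_cast
    ring_nf

/-- The coefficients of `((1 + T) ^ l - 1) * x`, by the binomial theorem; the leading term of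
`(1 + T) ^ l - 1` is split off. -/
lemma coeff_g_mul
    (hmul : ∀ x y : R, ∀ k, C k (x * y) = ∑' i : ℤ, C i x * C (k - i) y) {T : R}
    (hT : ∀ k, C k T = if k = 1 then 1 else 0) (x : R) (k : ℤ) :
    C k (((1 + T) ^ l - 1) * x) =
      ∑ i ∈ Finset.range (l - 1), (l.choose (i + 1) : ℤ_[l]) * C (k - (i + 1 : ℕ)) x
        + C (k - l) x := by
  have hl : l = l - 1 + 1 := (Nat.succ_pred_prime Fact.out).symm
  have h : ((1 + T) ^ l - 1) * x =
      ∑ i ∈ Finset.range l, (l.choose (i + 1)) • (T ^ (i + 1) * x) := by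
    rw [add_comm 1 T, add_pow, Finset.sum_range_succ']
    simp only [one_pow, mul_one, pow_zero, Nat.choose_zero_right, Nat.cast_one,
      add_sub_cancel_right, Finset.sum_mul, nsmul_eq_mul]
    exact Finset.sum_congr rfl fun i _ => by ring
  have h2 : C k (((1 + T) ^ l - 1) * x) =
      ∑ i ∈ Finset.range l, (l.choose (i + 1) : ℤ_[l]) * C (k - (i + 1 : ℕ)) x := by
    rw [h, map_sum]
    exact Finset.sum_congr rfl fun i _ => by
      rw [map_nsmul, coeff_T_pow_mul hmul hT, nsmul_eq_mul]
  rw [h2]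
  conv_lhs => rw [show Finset.range l = Finset.range (l - 1 + 1) by rw [← hl]]
  rw [Finset.sum_range_succ, ← hl, Nat.choose_self, Nat.cast_one, one_mul]

/-- The inverse of `(1 + T) ^ l - 1` has no coefficient above degree `-l`, because its
coefficients there are divisible by every power of `l`. -/
lemma coeff_inv_eq_zero
    (hmul : ∀ x y : R, ∀ k, C k (x * y) = ∑' i : ℤ, C i x * C (k - i) y)
    (hone : ∀ k, C k 1 = if k = 0 then 1 else 0) {T : R}
    (hT : ∀ k, C k T = if k = 1 then 1 else 0) {x : R} (hx : ((1 + T) ^ l - 1) * x = 1)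
    (k : ℤ) (hk : k > -l) : C k x = 0 := by
  have hp : Nat.Prime l := Fact.out
  have key : ∀ n : ℕ, ∀ k : ℤ, k > -l → (l : ℤ_[l]) ^ n ∣ C k x := by
    intro n
    induction n with
    | zero => intro k _; simp
    | succ n ih =>
      intro k hk
      have h := coeff_g_mul hmul hT x (k + l)
      rw [hx, hone, if_neg (by omega), add_sub_cancel_right] at h
      rw [eq_neg_of_add_eq_zero_right h.symm, dvd_neg]
      refine Finset.dvd_sum fun i hi => ?_
      have hi' := Finset.mem_range.1 hi
      rw [pow_succ']
      refine mul_dvd_mul ?_ (ih _ (by push_cast; omega))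
      exact_mod_cast Nat.cast_dvd_cast (hp.dvd_choose_self (by omega) (by omega))
  by_contra h0
  exact FiniteMultiplicity.not_pow_dvd_of_multiplicity_lt
    (FiniteMultiplicity.of_prime_left PadicInt.prime_p h0) (Nat.lt_succ_self _) (key _ k hk)

end Coefficients

/-- Inside `Λ∧` one has `Λ ∩ (l − ψ)Λ∧ = (l − ψ)Λ`:  a power series `x ∈ Λ`
(i.e. an element of `Λ∧` with vanishing coefficients in negative degrees) lies in
the image of `Λ∧` under `l − ψ` if and only if it lies in the image of `Λ`. -/
theorem statement8 (l : ℕ) [Fact (Nat.Prime l)] (hl : Odd l)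
    -- `R` is the ring `Λ∧ = ℤ_l{{T}}`, the `l`-adic completion of the localization
    -- of `Λ = ℤ_l[[T]]` at the prime ideal `lΛ`, described concretely through its
    -- coefficient functions `C k : Λ∧ → ℤ_l` (`x = ∑_{k ∈ ℤ} (C k x)·T^k`,
    -- `C k x → 0` l-adically as `k → −∞`).
    (R : Type) [CommRing R] [Algebra ℤ_[l] R]
    (C : ℤ → R → ℤ_[l]) (Tu gu : Rˣ) (ψ : R →+* R)
    (hext : ∀ x y : R, (∀ k, C k x = C k y) → x = y)
    (hsurj : ∀ f : ℤ → ℤ_[l], Tendsto f atBot (nhds 0) → ∃ x : R, ∀ k, C k x = f k)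
    (htend : ∀ x : R, Tendsto (fun k => C k x) atBot (nhds 0))
    (hadd : ∀ x y : R, ∀ k, C k (x + y) = C k x + C k y)
    (hmul : ∀ x y : R, ∀ k, C k (x * y) = ∑' i : ℤ, C i x * C (k - i) y)
    (halg : ∀ (a : ℤ_[l]) (k : ℤ),
      C k (algebraMap ℤ_[l] R a) = if k = 0 then a else 0)
    (hT : ∀ k, C k (Tu : R) = if k = 1 then 1 else 0)
    (hgu : (gu : R) = (1 + (Tu : R)) ^ l - 1)
    (hψ : ∀ (x : R) (k : ℤ),
      C k (ψ x) = ∑' m : ℤ, C m x * C k ((gu ^ m : Rˣ) : R)) :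
    {x : R | (∀ k : ℤ, k < 0 → C k x = 0) ∧ ∃ y : R, x = (l : ℤ_[l]) • y - ψ y} =
      {x : R | ∃ y : R, (∀ k : ℤ, k < 0 → C k y = 0) ∧ x = (l : ℤ_[l]) • y - ψ y} := by
  -- The coefficient maps bundled as additive maps.
  let D : ℤ → R →+ ℤ_[l] := fun k => AddMonoidHom.mk' (C k) fun x y => hadd x y k
  have hp : Nat.Prime l := Fact.out
  have hone : ∀ k, D k 1 = if k = 0 then 1 else 0 := fun k => by
    have h := halg 1 k
    rw [map_one] at h
    exact h
  have hmulD : ∀ x y : R, ∀ k, D k (x * y) = ∑' i : ℤ, D i x * D (k - i) y := hmul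
  have hTD : ∀ k, D k (Tu : R) = if k = 1 then 1 else 0 := hT
  have hg : ∀ k < 0, D k (gu : R) = 0 := by
    intro k hk
    rw [← mul_one (gu : R), hgu, coeff_g_mul hmulD hTD, hone, if_neg (by omega), add_zero]
    exact Finset.sum_eq_zero fun i _ => by rw [hone, if_neg (by push_cast; omega), mul_zero]
  have hgpos : ∀ m : ℤ, 0 ≤ m → ∀ k < 0, C k ((gu ^ m : Rˣ) : R) = 0 := by
    intro m hm k hk
    lift m to ℕ using hm
    rw [zpow_natCast, Units.val_pow_eq_pow_val]
    exact coeff_pow_eq_zero_of_lt hmulD hone hg m k hk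
  have hinv : ∀ k > -(l : ℤ), D k ((gu⁻¹ : Rˣ) : R) = 0 :=
    coeff_inv_eq_zero hmulD hone hTD (by rw [← hgu, Units.mul_inv])
  have hgneg : ∀ m : ℤ, m ≤ 0 → ∀ k > l * m, C k ((gu ^ m : Rˣ) : R) = 0 := by
    intro m hm k hk
    obtain ⟨n, rfl⟩ : ∃ n : ℕ, m = -n := ⟨m.natAbs, by omega⟩
    rw [zpow_neg, zpow_natCast, ← inv_pow, Units.val_pow_eq_pow_val]
    exact coeff_pow_eq_zero_of_gt hmulD hone hinv n k (by linarith)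
  have hC : ∀ (y : R) (k : ℤ), C k ((l : ℤ_[l]) • y - ψ y) = l * C k y - C k (ψ y) := by
    intro y k
    change D k _ = l * D k y - D k (ψ y)
    rw [map_sub, Nat.cast_smul_eq_nsmul, map_nsmul, nsmul_eq_mul]
  ext x
  constructor
  · rintro ⟨hx, y, rfl⟩
    refine ⟨y, ?_, rfl⟩
    have main : ∀ n : ℕ, ∀ k : ℤ, k < 0 → k.natAbs = n → C k y = 0 := by
      intro n
      induction n using Nat.strong_induction_on with
      | _ n ih =>
        intro k hk hkn
        have hzero : C k (ψ y) = 0 := by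
          rw [hψ]
          refine (tsum_congr fun m => ?_).trans tsum_zero
          rcases le_or_gt 0 m with hm | hm
          · rw [hgpos m hm k hk, mul_zero]
          rcases lt_or_ge k m with hkm | hkm
          · rw [ih m.natAbs (by omega) m hm rfl, zero_mul]
          · have h2 : (2 : ℤ) ≤ l := by exact_mod_cast hp.two_le
            rw [hgneg m hm.le k (by nlinarith), mul_zero]
        have h := hx k hk
        rw [hC, hzero, sub_zero] at h
        exact (mul_eq_zero.1 h).resolve_left (Nat.cast_ne_zero.2 hp.ne_zero)
    exact fun k hk => main _ k hk rfl
  · rintro ⟨y, hy, rfl⟩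
    refine ⟨fun k hk => ?_, y, rfl⟩
    rw [hC, hy k hk, mul_zero, zero_sub, neg_eq_zero, hψ]
    refine (tsum_congr fun m => ?_).trans tsum_zero
    rcases lt_or_ge m 0 with hm | hm
    · rw [hy m hm, zero_mul]
    · rw [hgpos m hm k hk, mul_zero]
end

section
/- The ℤ_l-linear map l−ψ : Λ∧ → Λ∧ is injective, and its image equals L(1 + lΛ∧), the image of the subgroup 1 + lΛ∧ of Λ∧× under the integral logarithm L. -/
/-!
Write `R = Λ∧`. The ring `R` is `l`-torsion free, separated and complete for the `l`-adic topology
(`LaurentCoeff.lAdic`), and this is all that is needed to describe the logarithm on `1 + lR`.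

*The image.* Put `w v = l⁻¹ log (1 + l v)` (`logDiv`). Its coefficients `(-1)^j l^j / (j + 1)` are
`l`-adic integers tending to `0`, and are divisible by `l` for `j ≥ 1` because `l` is odd. Hence
`v ↦ w v - v` is a contraction and `w : R → R` is surjective (`logDiv_surjective`). Moreover
`w v = lim ((1 + l v) ^ (l ^ n) - 1) / l ^ (n + 1)` (`powQuot_tendsto`), as one sees from the binomial
theorem and `C(l ^ n - 1, j) → (-1)^j`. This formula makes it plain that `w` turns products of
elements of `1 + lR` into sums (`logDiv_mul`) and commutes with ring endomorphisms (`map_logDiv`).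
So for `e = 1 + l v` one gets `L(e) = l⁻¹ (l log e - log (ψ e)) = l w(v) - ψ (w v)`, and as `w v`
runs through all of `R`, the image of `1 + lR` under `L` is the image of `l - ψ`.

*Injectivity.* The map `ψ` is injective modulo `l` (`LaurentCoeff.dvd_of_dvd_psi`), so a solution
of `l x = ψ x` is divisible by `l`, the quotient is again a solution, and `x` is infinitely
divisible by `l`, thus zero.
-/

open Filter

set_option linter.unusedVariables false

/-- `x n → s` in the `l`-adic topology of `R`. -/
def LAdicLim {R : Type} [CommRing R] (l : ℕ) (x : ℕ → R) (s : R) : Prop :=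
  ∀ M : ℕ, ∃ N : ℕ, ∀ n ≥ N, (l : R) ^ M ∣ x n - s

/-- `R` is `l`-torsion free and complete and separated for the `l`-adic topology. -/
structure LAdic (l : ℕ) (R : Type) [CommRing R] : Prop where
  torsionFree : ∀ x : R, (l : R) * x = 0 → x = 0
  separated : ∀ x : R, (∀ M : ℕ, (l : R) ^ M ∣ x) → x = 0
  complete : ∀ x : ℕ → R, (∀ M : ℕ, ∃ N : ℕ, ∀ n ≥ N, (l : R) ^ M ∣ x (n + 1) - x n) →
    ∃ s, LAdicLim l x s

/-! ### Limits in `l`-adically complete rings -/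

section Limits

variable {l : ℕ} {R : Type} [CommRing R]

theorem LAdic.pow_cancel (hR : LAdic l R) (n : ℕ) {x y : R}
    (h : (l : R) ^ n * x = (l : R) ^ n * y) : x = y := by
  induction n with
  | zero => simpa using h
  | succ n ih =>
    apply ih
    have := hR.torsionFree ((l : R) ^ n * x - (l : R) ^ n * y) (by linear_combination h)
    exact sub_eq_zero.mp this

theorem LAdicLim.unique (hR : LAdic l R) {x : ℕ → R} {s t : R}
    (hs : LAdicLim l x s) (ht : LAdicLim l x t) : s = t := by
  refine sub_eq_zero.mp (hR.separated _ fun M => ?_)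
  obtain ⟨N, hN⟩ := hs M
  obtain ⟨N', hN'⟩ := ht M
  have := dvd_sub (hN' (max N N') (le_max_right _ _)) (hN (max N N') (le_max_left _ _))
  convert this using 1
  ring

theorem LAdicLim.add {x y : ℕ → R} {s t : R}
    (hs : LAdicLim l x s) (ht : LAdicLim l y t) :
    LAdicLim l (fun n => x n + y n) (s + t) := by
  intro M
  obtain ⟨N, hN⟩ := hs M
  obtain ⟨N', hN'⟩ := ht M
  refine ⟨max N N', fun n hn => ?_⟩
  have := dvd_add (hN n (le_of_max_le_left hn)) (hN' n (le_of_max_le_right hn))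
  convert this using 1
  ring

theorem LAdicLim.map {x : ℕ → R} {s : R} (ψ : R →+* R) (hs : LAdicLim l x s) :
    LAdicLim l (fun n => ψ (x n)) (ψ s) := by
  intro M
  obtain ⟨N, hN⟩ := hs M
  refine ⟨N, fun n hn => ?_⟩
  simpa using map_dvd ψ (hN n hn)

/-- The contraction principle for the `l`-adic topology. -/
theorem LAdic.exists_fixed (hR : LAdic l R) (F : R → R)
    (hF : ∀ (m : ℕ) (x y : R), (l : R) ^ m ∣ x - y → (l : R) ^ (m + 1) ∣ F x - F y) :
    ∃ x, F x = x := by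
  have hstep : ∀ n, (l : R) ^ n ∣ F^[n + 1] 0 - F^[n] 0 := by
    intro n
    induction n with
    | zero => simp
    | succ n ih =>
      rw [Function.iterate_succ_apply' F (n + 1), Function.iterate_succ_apply' F n]
      rw [Function.iterate_succ_apply' F n] at ih
      exact hF _ _ _ ih
  obtain ⟨s, hs⟩ := hR.complete (fun n => F^[n] 0)
    (fun M => ⟨M, fun n hn => (pow_dvd_pow _ hn).trans (hstep n)⟩)
  refine ⟨s, sub_eq_zero.mp (hR.separated _ fun M => ?_)⟩
  obtain ⟨N, hN⟩ := hs M
  have h1 := hN (N + 1) (by omega)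
  have h2 := (pow_dvd_pow _ (Nat.le_succ M)).trans (hF M _ _ (hN N le_rfl))
  simp only [Function.iterate_succ_apply'] at h1
  have := dvd_sub h1 h2
  convert this using 1
  ring

theorem LAdic.exists_inverse (hR : LAdic l R) (v : R) :
    ∃ v', (1 + (l : R) * v) * (1 + (l : R) * v') = 1 := by
  obtain ⟨v', h⟩ := hR.exists_fixed (fun x => -v - (l : R) * v * x) (by
    rintro m x y ⟨c, hc⟩
    exact ⟨-(v * c), by linear_combination (-(l : R) * v) * hc⟩)
  exact ⟨v', by linear_combination (-(l : R)) * h⟩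

end Limits

/-! ### Coefficients of the logarithm and binomial coefficients -/

section Arithmetic

variable {l : ℕ} [Fact (Nat.Prime l)]

/-- The number `l ^ j / (j + 1)` is an `l`-adic integer, and tends to `0`; that it is divisible
by `l` for `j ≥ 1` uses that `l` is odd. -/
theorem exists_logCoeff (hl : Odd l) (j : ℕ) :
    ∃ a : ℤ_[l], ((j : ℤ_[l]) + 1) * a = (-1) ^ j * (l : ℤ_[l]) ^ j ∧
      (l : ℤ_[l]) ^ ((j + 1) / 2) ∣ a := by
  have hp : Nat.Prime l := Fact.out
  have h3 : 3 ≤ l := by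
    have := hp.two_le
    rcases hl with ⟨k, rfl⟩
    omega
  obtain ⟨s, m, hm, hsm⟩ := Nat.exists_eq_pow_mul_and_not_dvd (n := j + 1) (by omega) l hp.ne_one
  have hmu : IsUnit (m : ℤ_[l]) := by
    rw [PadicInt.isUnit_iff, PadicInt.norm_natCast_eq_one_iff]
    exact (Nat.Prime.coprime_iff_not_dvd hp).mpr hm
  have hs : 2 * s ≤ j := by
    have h1 : l ^ s ≤ j + 1 := Nat.le_of_dvd (by omega) ⟨m, hsm⟩
    have h2 : 3 ^ s ≤ l ^ s := Nat.pow_le_pow_left h3 s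
    have h4 : 2 * s + 1 ≤ 3 ^ s := by
      clear * -
      induction s with
      | zero => simp
      | succ s ih => rw [pow_succ]; omega
    omega
  obtain ⟨u, hu⟩ := hmu
  refine ⟨(-1) ^ j * (l : ℤ_[l]) ^ (j - s) * ((u⁻¹ : (ℤ_[l])ˣ) : ℤ_[l]), ?_, ?_⟩
  · have hc : ((j : ℤ_[l]) + 1) = (l : ℤ_[l]) ^ s * u := by
      rw [hu]; exact_mod_cast congrArg (Nat.cast (R := ℤ_[l])) hsm
    have hpow : (l : ℤ_[l]) ^ j = (l : ℤ_[l]) ^ s * (l : ℤ_[l]) ^ (j - s) := by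
      rw [← pow_add]; congr 1; omega
    rw [hc, hpow]
    linear_combination ((-1) ^ j * (l : ℤ_[l]) ^ (j - s) * (l : ℤ_[l]) ^ s) * u.mul_inv
  · exact ((pow_dvd_pow _ (by omega)).mul_left _).mul_right _

/-- The coefficient `(-1)^j l^j / (j + 1)` of `v ^ (j + 1)` in `l⁻¹ log (1 + l v)`. -/
noncomputable def logCoeff (hl : Odd l) (j : ℕ) : ℤ_[l] := (exists_logCoeff hl j).choose

theorem logCoeff_mul (hl : Odd l) (j : ℕ) :
    ((j : ℤ_[l]) + 1) * logCoeff hl j = (-1) ^ j * (l : ℤ_[l]) ^ j :=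
  (exists_logCoeff hl j).choose_spec.1

theorem pow_dvd_logCoeff (hl : Odd l) (j : ℕ) : (l : ℤ_[l]) ^ ((j + 1) / 2) ∣ logCoeff hl j :=
  (exists_logCoeff hl j).choose_spec.2

theorem logCoeff_zero (hl : Odd l) : logCoeff hl 0 = 1 := by
  simpa using logCoeff_mul hl 0

theorem pow_dvd_choose_pow (j M n : ℕ) (hn : M + j ≤ n) : l ^ M ∣ (l ^ n).choose (j + 1) := by
  have hp : Nat.Prime l := Fact.out
  obtain ⟨s, m, hm, hsm⟩ := Nat.exists_eq_pow_mul_and_not_dvd (n := j + 1) (by omega) l hp.ne_one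
  have hs : s ≤ j := by
    have h1 : l ^ s ≤ j + 1 := Nat.le_of_dvd (by omega) ⟨m, hsm⟩
    have h2 := Nat.lt_pow_self hp.one_lt (n := s)
    omega
  have hpos : 0 < l ^ n := pow_pos hp.pos n
  have h := Nat.add_one_mul_choose_eq (l ^ n - 1) j
  rw [Nat.sub_add_cancel hpos] at h
  have hd : l ^ s * l ^ M ∣ l ^ s * (m * (l ^ n).choose (j + 1)) := by
    rw [← mul_assoc, ← hsm, mul_comm (j + 1), ← h, ← pow_add]
    exact (pow_dvd_pow _ (by omega)).mul_right _
  have hdvd := Nat.dvd_of_mul_dvd_mul_left (pow_pos hp.pos s) hd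
  exact (Nat.Coprime.pow_left M ((Nat.Prime.coprime_iff_not_dvd hp).mpr hm)).dvd_of_dvd_mul_left hdvd

/-- `C(l^n - 1, j)` tends to `C(-1, j) = (-1)^j` as `n → ∞`. -/
theorem choose_pred_tendsto (j M : ℕ) : ∃ N : ℕ, ∀ n ≥ N,
    (l : ℤ_[l]) ^ M ∣ (-1) ^ j * ((l ^ n - 1).choose j : ℤ_[l]) - 1 := by
  have hp : Nat.Prime l := Fact.out
  induction j with
  | zero => exact ⟨0, by simp⟩
  | succ j ih =>
    obtain ⟨N, hN⟩ := ih
    refine ⟨max N (M + j), fun n hn => ?_⟩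
    have h1 := hN n (le_of_max_le_left hn)
    have h2 : (l : ℤ_[l]) ^ M ∣ ((l ^ n).choose (j + 1) : ℤ_[l]) := by
      exact_mod_cast Nat.cast_dvd_cast (α := ℤ_[l])
        (pow_dvd_choose_pow j M n (le_of_max_le_right hn))
    have h3 : ((l ^ n).choose (j + 1) : ℤ_[l]) =
        ((l ^ n - 1).choose j : ℤ_[l]) + ((l ^ n - 1).choose (j + 1) : ℤ_[l]) := by
      have := Nat.choose_succ_succ (l ^ n - 1) j
      rw [Nat.succ_eq_add_one, Nat.sub_add_cancel (pow_pos hp.pos n)] at this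
      exact_mod_cast this
    have := dvd_add (h2.mul_left ((-1) ^ (j + 1))) h1
    convert this using 1
    rw [h3]
    ring

end Arithmetic

/-! ### The divided logarithm -/

section Log

variable {l : ℕ} [Fact (Nat.Prime l)] {R : Type} [CommRing R] [Algebra ℤ_[l] R]

theorem dvd_algebraMap {M : ℕ} {a : ℤ_[l]} (h : (l : ℤ_[l]) ^ M ∣ a) :
    (l : R) ^ M ∣ algebraMap ℤ_[l] R a := by
  simpa using map_dvd (algebraMap ℤ_[l] R) h

theorem exists_logSeries (hl : Odd l) (hR : LAdic l R) (v : R) : ∃ s, LAdicLim l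
    (fun N => ∑ j ∈ Finset.range N, algebraMap ℤ_[l] R (logCoeff hl j) * v ^ (j + 1)) s := by
  refine hR.complete _ fun M => ⟨2 * M, fun n hn => ?_⟩
  simp only [Finset.sum_range_succ, add_sub_cancel_left]
  refine (dvd_algebraMap ?_).mul_right _
  exact (pow_dvd_pow _ (by omega)).trans (pow_dvd_logCoeff hl n)

/-- `l⁻¹ log (1 + l v)`, as the sum of its power series in `v`. -/
noncomputable def logDiv (hl : Odd l) (hR : LAdic l R) (v : R) : R :=
  (exists_logSeries hl hR v).choose

theorem logDiv_spec (hl : Odd l) (hR : LAdic l R) (v : R) : LAdicLim l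
    (fun N => ∑ j ∈ Finset.range N, algebraMap ℤ_[l] R (logCoeff hl j) * v ^ (j + 1))
    (logDiv hl hR v) :=
  (exists_logSeries hl hR v).choose_spec

/-- `((1 + l v) ^ (l ^ n) - 1) / l ^ (n + 1)`, expanded by the binomial theorem. -/
noncomputable def powQuot (hl : Odd l) (n : ℕ) (v : R) : R :=
  ∑ j ∈ Finset.range (l ^ n), algebraMap ℤ_[l] R
    ((-1) ^ j * ((l ^ n - 1).choose j : ℤ_[l]) * logCoeff hl j) * v ^ (j + 1)

theorem powQuot_spec (hl : Odd l) (n : ℕ) (v : R) :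
    (1 + (l : R) * v) ^ (l ^ n) = 1 + (l : R) ^ (n + 1) * powQuot hl n v := by
  have hp : Nat.Prime l := Fact.out
  have hpos : 0 < l ^ n := pow_pos hp.pos n
  rw [add_comm, add_pow, Finset.sum_range_succ', add_comm]
  congr 1
  · simp
  rw [powQuot, Finset.mul_sum]
  refine Finset.sum_congr rfl fun j _ => ?_
  have key : ((l ^ n).choose (j + 1) : ℤ_[l]) * (l : ℤ_[l]) ^ (j + 1) = (l : ℤ_[l]) ^ (n + 1) *
      ((-1) ^ j * ((l ^ n - 1).choose j : ℤ_[l]) * logCoeff hl j) := by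
    have h := Nat.add_one_mul_choose_eq (l ^ n - 1) j
    rw [Nat.sub_add_cancel hpos] at h
    have h' : (l : ℤ_[l]) ^ n * ((l ^ n - 1).choose j : ℤ_[l]) =
        ((l ^ n).choose (j + 1) : ℤ_[l]) * ((j : ℤ_[l]) + 1) := by exact_mod_cast h
    have hj : ((j : ℤ_[l]) + 1) ≠ 0 := by exact_mod_cast Nat.succ_ne_zero j
    have hsq : ((-1 : ℤ_[l]) ^ j) * (-1) ^ j = 1 := by rw [← mul_pow]; simp
    apply mul_left_cancel₀ hj
    linear_combination (-(l : ℤ_[l]) ^ (j + 1)) * h'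
      - (l : ℤ_[l]) ^ (n + 1) * (-1) ^ j * ((l ^ n - 1).choose j : ℤ_[l]) * logCoeff_mul hl j
      - (l : ℤ_[l]) ^ (n + 1 + j) * ((l ^ n - 1).choose j : ℤ_[l]) * hsq
  have key' := congrArg (algebraMap ℤ_[l] R) key
  rw [map_mul, map_mul _ ((l : ℤ_[l]) ^ (n + 1))] at key'
  simp only [map_pow, map_natCast] at key'
  rw [one_pow, mul_pow]
  linear_combination v ^ (j + 1) * key'

/-- The logarithm as a limit of divided powers: `l⁻¹ log e = lim (e ^ (l ^ n) - 1) / l ^ (n + 1)`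
for `e = 1 + l v`. -/
theorem powQuot_tendsto (hl : Odd l) (hR : LAdic l R) (v : R) :
    LAdicLim l (fun n => powQuot hl n v) (logDiv hl hR v) := by
  have hp : Nat.Prime l := Fact.out
  intro M
  choose N hN using fun j => choose_pred_tendsto (l := l) j M
  obtain ⟨K, hK⟩ := logDiv_spec hl hR v M
  refine ⟨max K ((Finset.range (2 * M)).sup N), fun n hn => ?_⟩
  have h1 := hK (l ^ n) ((le_of_max_le_left hn).trans (Nat.lt_pow_self hp.one_lt).le)
  have h2 : (l : R) ^ M ∣ powQuot hl n v -
      ∑ j ∈ Finset.range (l ^ n), algebraMap ℤ_[l] R (logCoeff hl j) * v ^ (j + 1) := by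
    rw [powQuot, ← Finset.sum_sub_distrib]
    refine Finset.dvd_sum fun j _ => ?_
    rw [← sub_mul, ← map_sub]
    refine (dvd_algebraMap ?_).mul_right _
    rw [← sub_one_mul]
    -- small `j`: the binomial coefficient is close to its limit; large `j`: `logCoeff` is small
    by_cases hj : j < 2 * M
    · exact (hN j n ((Finset.le_sup (Finset.mem_range.mpr hj)).trans
        (le_of_max_le_right hn))).mul_right _
    · exact ((pow_dvd_pow _ (by omega)).trans (pow_dvd_logCoeff hl j)).mul_left _
  have := dvd_add h1 h2
  convert this using 1
  ring

theorem logDiv_mul (hl : Odd l) (hR : LAdic l R) {u v x : R}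
    (h : (1 + (l : R) * u) * (1 + (l : R) * v) = 1 + (l : R) * x) :
    logDiv hl hR x = logDiv hl hR u + logDiv hl hR v := by
  have hq : ∀ n, powQuot hl n x = powQuot hl n u + powQuot hl n v +
      (l : R) ^ (n + 1) * (powQuot hl n u * powQuot hl n v) := by
    intro n
    have := congrArg (· ^ (l ^ n)) h
    simp only [mul_pow (1 + (l : R) * u), powQuot_spec hl] at this
    apply hR.pow_cancel (n + 1)
    linear_combination -this
  refine (powQuot_tendsto hl hR x).unique hR ?_
  have h0 : LAdicLim l (fun n => (l : R) ^ (n + 1) * (powQuot hl n u * powQuot hl n v)) 0 :=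
    fun M => ⟨M, fun n hn => by
      rw [sub_zero]; exact (pow_dvd_pow _ (by omega)).mul_right _⟩
  simpa only [← hq, add_zero] using
    ((powQuot_tendsto hl hR u).add (powQuot_tendsto hl hR v)).add h0

theorem logDiv_pow (hl : Odd l) (hR : LAdic l R) {u : R} (m : ℕ) : ∀ {x : R},
    (1 + (l : R) * u) ^ m = 1 + (l : R) * x → logDiv hl hR x = m * logDiv hl hR u := by
  induction m with
  | zero =>
    intro x h
    have hx : x = 0 := hR.torsionFree x (by linear_combination -h)
    subst hx
    have := logDiv_mul hl hR (u := 0) (v := 0) (x := (0 : R)) (by ring)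
    simpa using this
  | succ m ih =>
    intro x h
    obtain ⟨y, hy⟩ : (l : R) ∣ (1 + (l : R) * u) ^ m - 1 :=
      (Dvd.intro _ (by ring : (l : R) * u = 1 + (l : R) * u - 1)).trans (sub_one_dvd_pow_sub_one _ m)
    have hy' : (1 + (l : R) * u) ^ m = 1 + (l : R) * y := by linear_combination hy
    rw [pow_succ, hy'] at h
    rw [logDiv_mul hl hR h, ih hy']
    push_cast
    ring

theorem map_logDiv (hl : Odd l) (hR : LAdic l R) (ψ : R →+* R) (v : R) :
    ψ (logDiv hl hR v) = logDiv hl hR (ψ v) := by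
  refine ((powQuot_tendsto hl hR v).map ψ).unique hR ?_
  have hq : ∀ n, ψ (powQuot hl n v) = powQuot hl n (ψ v) := by
    intro n
    have := congrArg ψ (powQuot_spec hl n v)
    simp only [map_pow, map_add, map_one, map_mul, map_natCast] at this
    rw [powQuot_spec hl] at this
    apply hR.pow_cancel (n + 1)
    linear_combination -this
  simpa only [hq] using powQuot_tendsto hl hR (ψ v)

theorem logDiv_surjective (hl : Odd l) (hR : LAdic l R) :
    Function.Surjective (logDiv hl hR : R → R) := by
  intro y
  obtain ⟨v, hv⟩ := hR.exists_fixed (fun v => y - (logDiv hl hR v - v)) (by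
    intro m x z hxz
    obtain ⟨N, hN⟩ := logDiv_spec hl hR x (m + 1)
    obtain ⟨N', hN'⟩ := logDiv_spec hl hR z (m + 1)
    have h1 := hN (max N N' + 1) (by omega)
    have h2 := hN' (max N N' + 1) (by omega)
    simp only [Finset.sum_range_succ', logCoeff_zero] at h1 h2
    have h3 : (l : R) ^ (m + 1) ∣
        ∑ j ∈ Finset.range (max N N'),
            algebraMap ℤ_[l] R (logCoeff hl (j + 1)) * x ^ (j + 1 + 1) -
          ∑ j ∈ Finset.range (max N N'),
            algebraMap ℤ_[l] R (logCoeff hl (j + 1)) * z ^ (j + 1 + 1) := by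
      rw [← Finset.sum_sub_distrib]
      refine Finset.dvd_sum fun j _ => ?_
      rw [← mul_sub, add_comm m, pow_add]
      refine mul_dvd_mul (dvd_algebraMap ?_) (hxz.trans (sub_dvd_pow_sub_pow _ _ _))
      exact (pow_dvd_pow _ (by omega)).trans (pow_dvd_logCoeff hl (j + 1))
    have := dvd_sub (dvd_sub h1 h2) h3
    convert this using 1
    simp
    ring)
  exact ⟨v, by linear_combination -hv⟩

end Log

/-! ### Laurent series with coefficients tending to zero -/

section Coefficients

variable {l : ℕ} [Fact (Nat.Prime l)]

theorem padicInt_tendsto_zero_iff {ι : Type} {L : Filter ι} {f : ι → ℤ_[l]} :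
    Tendsto f L (nhds 0) ↔ ∀ M : ℕ, ∀ᶠ k in L, (l : ℤ_[l]) ^ M ∣ f k := by
  have hp : Nat.Prime l := Fact.out
  have hd : ∀ (M : ℕ) (a : ℤ_[l]), (l : ℤ_[l]) ^ M ∣ a ↔ ‖a‖ ≤ (l : ℝ) ^ (-M : ℤ) := by
    intro M a
    rw [PadicInt.norm_le_pow_iff_mem_span_pow, Ideal.mem_span_singleton]
  rw [Metric.tendsto_nhds]
  simp only [dist_zero_right, hd]
  constructor
  · intro h M
    exact (h _ (zpow_pos (by exact_mod_cast hp.pos) _)).mono fun k hk => hk.le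
  · intro h ε hε
    obtain ⟨M, hM⟩ := PadicInt.exists_pow_neg_lt l hε
    exact (h M).mono fun k hk => hk.trans_lt hM

variable {R : Type} [CommRing R] [Algebra ℤ_[l] R]

/-- `C` and `Tu` present `R` as the ring of Laurent series `∑ (C k x) T ^ k` over `ℤ_l` whose
coefficients tend to `0` as `k → -∞`. -/
structure LaurentCoeff (C : ℤ → R → ℤ_[l]) (Tu : Rˣ) : Prop where
  ext : ∀ x y : R, (∀ k, C k x = C k y) → x = y
  surj : ∀ f : ℤ → ℤ_[l], Tendsto f atBot (nhds 0) → ∃ x : R, ∀ k, C k x = f k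
  tend : ∀ x : R, Tendsto (fun k => C k x) atBot (nhds 0)
  add : ∀ x y : R, ∀ k, C k (x + y) = C k x + C k y
  mul : ∀ x y : R, ∀ k, C k (x * y) = ∑' i : ℤ, C i x * C (k - i) y
  alg : ∀ (a : ℤ_[l]) (k : ℤ), C k (algebraMap ℤ_[l] R a) = if k = 0 then a else 0
  T : ∀ k, C k (Tu : R) = if k = 1 then 1 else 0

namespace LaurentCoeff

variable {C : ℤ → R → ℤ_[l]} {Tu : Rˣ}

theorem zero (h : LaurentCoeff C Tu) (k : ℤ) : C k 0 = 0 := by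
  simpa using h.add 0 0 k

theorem sub (h : LaurentCoeff C Tu) (x y : R) (k : ℤ) : C k (x - y) = C k x - C k y := by
  have := h.add (x - y) y k
  rw [sub_add_cancel] at this
  rw [this, add_sub_cancel_right]

theorem sum (h : LaurentCoeff C Tu) (k : ℤ) (x : ℕ → R) (N : ℕ) :
    C k (∑ j ∈ Finset.range N, x j) = ∑ j ∈ Finset.range N, C k (x j) := by
  induction N with
  | zero => simp [h.zero]
  | succ N ih => rw [Finset.sum_range_succ, Finset.sum_range_succ, h.add, ih]

theorem algebraMap_mul (h : LaurentCoeff C Tu) (a : ℤ_[l]) (x : R) (k : ℤ) :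
    C k (algebraMap ℤ_[l] R a * x) = a * C k x := by
  rw [h.mul, tsum_eq_single 0]
  · simp [h.alg]
  · intro i hi
    simp [h.alg, hi]

theorem pow_mul (h : LaurentCoeff C Tu) (M : ℕ) (x : R) (k : ℤ) :
    C k ((l : R) ^ M * x) = (l : ℤ_[l]) ^ M * C k x := by
  simpa using h.algebraMap_mul ((l : ℤ_[l]) ^ M) x k

theorem one (h : LaurentCoeff C Tu) (k : ℤ) : C k 1 = if k = 0 then 1 else 0 := by
  simpa using h.alg 1 k

theorem pow_dvd_iff (h : LaurentCoeff C Tu) (M : ℕ) (x : R) :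
    (l : R) ^ M ∣ x ↔ ∀ k, (l : ℤ_[l]) ^ M ∣ C k x := by
  have hp : Nat.Prime l := Fact.out
  constructor
  · rintro ⟨y, rfl⟩ k
    exact ⟨C k y, h.pow_mul M y k⟩
  · intro hd
    choose f hf using hd
    have hl0 : (l : ℤ_[l]) ≠ 0 := by exact_mod_cast hp.ne_zero
    obtain ⟨y, hy⟩ := h.surj f (by
      rw [padicInt_tendsto_zero_iff]
      intro K
      filter_upwards [padicInt_tendsto_zero_iff.mp (h.tend x) (M + K)] with k hk
      rw [hf, pow_add] at hk
      exact (mul_dvd_mul_iff_left (pow_ne_zero _ hl0)).mp hk)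
    exact ⟨y, h.ext _ _ fun k => by rw [h.pow_mul, hy, hf]⟩

theorem coeff_tendsto (h : LaurentCoeff C Tu) {x : ℕ → R} {s : R} (hs : LAdicLim l x s)
    (k : ℤ) : Tendsto (fun n => C k (x n)) atTop (nhds (C k s)) := by
  rw [← tendsto_sub_nhds_zero_iff, padicInt_tendsto_zero_iff]
  intro M
  obtain ⟨N, hN⟩ := hs M
  filter_upwards [eventually_ge_atTop N] with n hn
  rw [← h.sub]
  exact (h.pow_dvd_iff M _).mp (hN n hn) k

theorem lAdic (h : LaurentCoeff C Tu) : LAdic l R := by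
  have hp : Nat.Prime l := Fact.out
  have hl0 : (l : ℤ_[l]) ≠ 0 := by exact_mod_cast hp.ne_zero
  refine ⟨fun x hx => h.ext _ _ fun k => ?_, fun x hx => h.ext _ _ fun k => ?_, fun x hx => ?_⟩
  · have := h.pow_mul 1 x k
    rw [pow_one, hx, h.zero, pow_one] at this
    rw [h.zero]
    exact (mul_eq_zero.mp this.symm).resolve_left hl0
  · rw [h.zero]
    have : Tendsto (fun _ : ℕ => C k x) atTop (nhds 0) :=
      padicInt_tendsto_zero_iff.mpr fun M =>
        Eventually.of_forall fun _ => (h.pow_dvd_iff M x).mp (hx M) k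
    exact tendsto_nhds_unique tendsto_const_nhds this
  · have hlim : ∀ k, ∃ a, Tendsto (fun n => C k (x n)) atTop (nhds a) := by
      intro k
      have hsum : Summable fun n => C k (x (n + 1)) - C k (x n) := by
        apply NonarchimedeanAddGroup.summable_of_tendsto_cofinite_zero
        rw [Nat.cofinite_eq_atTop, padicInt_tendsto_zero_iff]
        intro M
        obtain ⟨N, hN⟩ := hx M
        filter_upwards [eventually_ge_atTop N] with n hn
        rw [← h.sub]
        exact (h.pow_dvd_iff M _).mp (hN n hn) k
      have := hsum.hasSum.tendsto_sum_nat.add_const (C k (x 0))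
      simp only [Finset.sum_range_sub (fun n => C k (x n)), sub_add_cancel] at this
      exact ⟨_, this⟩
    choose f hf using hlim
    -- the coefficients converge uniformly in `k`
    have hunif : ∀ M : ℕ, ∃ N : ℕ, ∀ n ≥ N, ∀ k, (l : ℤ_[l]) ^ M ∣ C k (x n) - f k := by
      intro M
      obtain ⟨N, hN⟩ := hx M
      have hmono : ∀ n ≥ N, (l : R) ^ M ∣ x n - x N := by
        intro n hn
        induction n, hn using Nat.le_induction with
        | base => simp
        | succ n hn ih =>
          have := dvd_add (hN n hn) ih
          rwa [sub_add_sub_cancel] at this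
      refine ⟨N, fun n hn k => ?_⟩
      have hev := padicInt_tendsto_zero_iff.mp (tendsto_sub_nhds_zero_iff.mpr (hf k)) M
      obtain ⟨m, hm, hmN⟩ := (hev.and (eventually_ge_atTop N)).exists
      have h1 := (h.pow_dvd_iff M _).mp (dvd_sub (hmono n hn) (hmono m hmN)) k
      rw [sub_sub_sub_cancel_right, h.sub] at h1
      have := dvd_add h1 hm
      rwa [sub_add_sub_cancel] at this
    obtain ⟨s, hs⟩ := h.surj f (by
      rw [padicInt_tendsto_zero_iff]
      intro M
      obtain ⟨N, hN⟩ := hunif M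
      filter_upwards [padicInt_tendsto_zero_iff.mp (h.tend (x N)) M] with k hk
      have := dvd_sub hk (hN N le_rfl k)
      rwa [sub_sub_cancel] at this)
    refine ⟨s, fun M => ?_⟩
    obtain ⟨N, hN⟩ := hunif M
    refine ⟨N, fun n hn => (h.pow_dvd_iff M _).mpr fun k => ?_⟩
    rw [h.sub, hs]
    exact hN n hn k

theorem T_mul (h : LaurentCoeff C Tu) (x : R) (k : ℤ) : C k (Tu * x) = C (k - 1) x := by
  rw [h.mul, tsum_eq_single 1]
  · simp [h.T]
  · intro i hi
    simp [h.T, hi]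

theorem T_zpow_mul (h : LaurentCoeff C Tu) (m : ℤ) :
    ∀ (x : R) (k : ℤ), C k (((Tu ^ m : Rˣ) : R) * x) = C (k - m) x := by
  induction m using Int.induction_on with
  | zero => simp
  | succ m ih =>
    intro x k
    rw [zpow_add_one, Units.val_mul, mul_assoc, ih, h.T_mul]
    congr 1
    ring
  | pred m ih =>
    intro x k
    rw [zpow_sub_one, Units.val_mul, mul_assoc, ih]
    have := h.T_mul ((Tu⁻¹ : Rˣ) * x) (k - (-m - 1))
    rw [Units.mul_inv_cancel_left] at this
    rw [this]
    congr 1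
    ring

/-- Products of power series without constant term have no constant term. -/
theorem mul_vanish (h : LaurentCoeff C Tu) {x y : R} (hx : ∀ k < 1, C k x = 0)
    (hy : ∀ k < 1, C k y = 0) : ∀ k < 1, C k (x * y) = 0 := by
  intro k hk
  rw [h.mul]
  convert tsum_zero with i
  by_cases hi : i < 1
  · rw [hx i hi, zero_mul]
  · rw [hy (k - i) (by omega), mul_zero]

theorem one_add_T_pow_vanish (h : LaurentCoeff C Tu) (n : ℕ) :
    ∀ k < 1, C k ((1 + (Tu : R)) ^ n - 1) = 0 := by
  have hT : ∀ k < 1, C k (Tu : R) = 0 := fun k hk => by rw [h.T, if_neg hk.ne]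
  induction n with
  | zero => simp [h.zero]
  | succ n ih =>
    intro k hk
    have : (1 + (Tu : R)) ^ (n + 1) - 1 =
        ((1 + (Tu : R)) ^ n - 1) + ((1 + (Tu : R)) ^ n - 1) * Tu + Tu := by ring
    rw [this, h.add, h.add, ih k hk, h.mul_vanish ih hT k hk, hT k hk]
    simp

/-- The endomorphism `ψ` is injective modulo `l`: if `x` is not divisible by `l`, then up to a
power of `T` and a multiple of `l` it is a power series `z` whose constant term is a unit, and
`ψ z` has the same constant term. -/
theorem dvd_of_dvd_psi (h : LaurentCoeff C Tu) {gu : Rˣ} {ψ : R →+* R}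
    (hgu : (gu : R) = (1 + (Tu : R)) ^ l - 1)
    (hψ : ∀ (x : R) (k : ℤ), C k (ψ x) = ∑' m : ℤ, C m x * C k ((gu ^ m : Rˣ) : R))
    {x : R} (hx : (l : R) ∣ ψ x) : (l : R) ∣ x := by
  have hgupow : ∀ m : ℕ, ∀ k < 1, C k ((gu : R) ^ (m + 1)) = 0 := by
    have h1 : ∀ k < 1, C k (gu : R) = 0 := by rw [hgu]; exact h.one_add_T_pow_vanish l
    intro m
    induction m with
    | zero => simpa using h1
    | succ m ih => rw [pow_succ]; exact h.mul_vanish ih h1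
  have hdvd : ∀ y : R, (l : R) ∣ y ↔ ∀ k, (l : ℤ_[l]) ∣ C k y := by
    simpa using h.pow_dvd_iff 1
  by_contra hcon
  rw [hdvd] at hcon
  push Not at hcon
  have hbot := padicInt_tendsto_zero_iff.mp (h.tend x) 1
  obtain ⟨b, hb⟩ := eventually_atBot.mp hbot
  obtain ⟨m, hm, hleast⟩ := Int.exists_least_of_bdd (P := fun k => ¬ (l : ℤ_[l]) ∣ C k x)
    ⟨b, fun k hk => by
      by_contra hlt
      exact hk (by simpa using hb k (by omega))⟩ hcon
  set z₀ : R := ((Tu ^ (-m) : Rˣ) : R) * x with hz₀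
  have hCz₀ : ∀ k, C k z₀ = C (k + m) x := fun k => by
    rw [hz₀, h.T_zpow_mul, sub_neg_eq_add]
  obtain ⟨g, hg⟩ := h.surj (fun k => if k < 0 then C k z₀ else 0) (by
    refine (h.tend z₀).congr' ?_
    filter_upwards [eventually_lt_atBot 0] with k hk
    rw [if_pos hk])
  have hlg : (l : R) ∣ g := by
    rw [hdvd]
    intro k
    rw [hg]
    split_ifs with hk
    · rw [hCz₀]
      by_contra hn
      have := hleast _ hn
      omega
    · exact dvd_zero _
  have hψz : (l : R) ∣ ψ (z₀ - g) := by
    rw [map_sub, hz₀, map_mul]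
    refine dvd_sub (hx.mul_left _) ?_
    simpa using map_dvd ψ hlg
  have hC0 : C 0 (ψ (z₀ - g)) = C m x := by
    rw [hψ, tsum_eq_single 0]
    · simp [h.sub, hg, hCz₀, h.one]
    · intro i hi
      rcases lt_or_gt_of_ne hi with hi | hi
      · rw [h.sub, hg, if_pos hi, sub_self, zero_mul]
      · obtain ⟨n, rfl⟩ : ∃ n : ℕ, i = (n + 1 : ℕ) := ⟨(i - 1).toNat, by omega⟩
        rw [zpow_natCast, Units.val_pow_eq_pow_val, hgupow n 0 one_pos, mul_zero]
  exact hm (hC0 ▸ (hdvd _).mp hψz 0)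

end LaurentCoeff

end Coefficients

/-! ### The operator `l - ψ` and the integral logarithm -/

theorem eq_zero_of_mul_eq_psi {l : ℕ} {R : Type} [CommRing R] (hR : LAdic l R) {ψ : R →+* R}
    (hψ : ∀ x, (l : R) ∣ ψ x → (l : R) ∣ x) {x : R} (hx : (l : R) * x = ψ x) : x = 0 := by
  refine hR.separated x fun M => ?_
  induction M generalizing x with
  | zero => simp
  | succ M ih =>
    obtain ⟨y, rfl⟩ := hψ x ⟨x, hx.symm⟩
    rw [pow_succ']
    refine mul_dvd_mul_left _ (ih (hR.pow_cancel 1 ?_))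
    rw [map_mul, map_natCast] at hx
    simpa using hx

/-- An element `y` whose coefficients are those of `l⁻¹ log (1 + l t)`, computed in `ℚ_l`, equals
`logDiv t`. It is applied to `y = L(e)` and `1 + l t = e ^ l / ψ e`. -/
theorem LL_eq_logDiv {l : ℕ} [Fact (Nat.Prime l)] (hl : Odd l) {R : Type} [CommRing R]
    [Algebra ℤ_[l] R] {C : ℤ → R → ℤ_[l]} {Tu : Rˣ} (h : LaurentCoeff C Tu) {t y : R}
    (hy : ∀ k : ℤ, ((C k y : ℚ_[l])) = (l : ℚ_[l])⁻¹ *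
        ∑' n : ℕ, ((-1 : ℚ_[l]) ^ n / (n + 1)) * ((C k (((l : R) * t) ^ (n + 1)) : ℚ_[l]))) :
    y = logDiv hl h.lAdic t := by
  have hp : Nat.Prime l := Fact.out
  have hl0 : (l : ℚ_[l]) ≠ 0 := by exact_mod_cast hp.ne_zero
  refine h.ext _ _ fun k => ?_
  have hlim := h.coeff_tendsto (logDiv_spec hl h.lAdic t) k
  simp only [h.sum] at hlim
  have hsum : Summable fun n : ℕ =>
      C k (algebraMap ℤ_[l] R (logCoeff hl n) * t ^ (n + 1)) := by
    apply NonarchimedeanAddGroup.summable_of_tendsto_cofinite_zero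
    rw [Nat.cofinite_eq_atTop, padicInt_tendsto_zero_iff]
    intro M
    filter_upwards [eventually_ge_atTop (2 * M)] with n hn
    rw [h.algebraMap_mul]
    exact ((pow_dvd_pow _ (by omega)).trans (pow_dvd_logCoeff hl n)).mul_right _
  have hS := (hsum.hasSum_iff_tendsto_nat).mpr hlim
  have hS' := hS.map (PadicInt.Coe.ringHom (p := l)) continuous_subtype_val
  have hterm : ∀ n : ℕ, ((-1 : ℚ_[l]) ^ n / (n + 1)) * ((C k (((l : R) * t) ^ (n + 1)) : ℚ_[l])) =
      (l : ℚ_[l]) * ((C k (algebraMap ℤ_[l] R (logCoeff hl n) * t ^ (n + 1)) : ℤ_[l]) : ℚ_[l]) := by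
    intro n
    have hn : ((n : ℚ_[l]) + 1) ≠ 0 := by exact_mod_cast Nat.succ_ne_zero n
    have hc : ((n : ℚ_[l]) + 1) * (logCoeff hl n : ℚ_[l]) = (-1) ^ n * (l : ℚ_[l]) ^ n := by
      exact_mod_cast congrArg (fun a : ℤ_[l] => (a : ℚ_[l])) (logCoeff_mul hl n)
    rw [mul_pow, h.pow_mul, h.algebraMap_mul]
    push_cast
    field_simp
    linear_combination (-(l : ℚ_[l]) * (C k (t ^ (n + 1)) : ℚ_[l])) * hc
  have := hy k
  simp only [hterm] at this
  rw [tsum_mul_left, inv_mul_cancel_left₀ hl0] at this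
  apply Subtype.ext
  rw [this]
  exact hS'.tsum_eq

/-- **Lemma 2 (1).**  The `ℤ_l`-linear map `l − ψ : Λ∧ → Λ∧` is injective, and its
image equals `L(1 + lΛ∧)`, the image of the subgroup `1 + lΛ∧` of `Λ∧×` under the
integral logarithm `L`. -/
theorem statement9 (l : ℕ) [Fact (Nat.Prime l)] (hl : Odd l)
    -- `R` is the ring `Λ∧ = ℤ_l{{T}}`, the `l`-adic completion of the localization
    -- of `Λ = ℤ_l[[T]]` at the prime ideal `lΛ`, described concretely through its
    -- coefficient functions `C k : Λ∧ → ℤ_l` (`x = ∑_{k ∈ ℤ} (C k x)·T^k`,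
    -- `C k x → 0` l-adically as `k → −∞`).
    (R : Type) [CommRing R] [Algebra ℤ_[l] R]
    (C : ℤ → R → ℤ_[l]) (Tu gu : Rˣ) (ψ : R →+* R)
    (hext : ∀ x y : R, (∀ k, C k x = C k y) → x = y)
    (hsurj : ∀ f : ℤ → ℤ_[l], Tendsto f atBot (nhds 0) → ∃ x : R, ∀ k, C k x = f k)
    (htend : ∀ x : R, Tendsto (fun k => C k x) atBot (nhds 0))
    (hadd : ∀ x y : R, ∀ k, C k (x + y) = C k x + C k y)
    (hmul : ∀ x y : R, ∀ k, C k (x * y) = ∑' i : ℤ, C i x * C (k - i) y)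
    (halg : ∀ (a : ℤ_[l]) (k : ℤ),
      C k (algebraMap ℤ_[l] R a) = if k = 0 then a else 0)
    (hT : ∀ k, C k (Tu : R) = if k = 1 then 1 else 0)
    (hgu : (gu : R) = (1 + (Tu : R)) ^ l - 1)
    (hψ : ∀ (x : R) (k : ℤ),
      C k (ψ x) = ∑' m : ℤ, C m x * C k ((gu ^ m : Rˣ) : R))
    (LL : Rˣ → R)
    (hLL : ∀ (e : Rˣ) (k : ℤ),
      ((C k (LL e) : ℚ_[l])) = (l : ℚ_[l])⁻¹ *
        ∑' n : ℕ, ((-1 : ℚ_[l]) ^ n / (n + 1)) *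
          ((C k (((e : R) ^ l * Ring.inverse (ψ (e : R)) - 1) ^ (n + 1)) : ℚ_[l]))) :
    Function.Injective (fun x : R => (l : ℤ_[l]) • x - ψ x) ∧
    Set.range (fun x : R => (l : ℤ_[l]) • x - ψ x) =
      (fun e : Rˣ => LL e) '' {e : Rˣ | ∃ v : R, (e : R) = 1 + (l : ℤ_[l]) • v} := by
  have h : LaurentCoeff C Tu := ⟨hext, hsurj, htend, hadd, hmul, halg, hT⟩
  have hR : LAdic l R := h.lAdic
  have hsmul : ∀ x : R, (l : ℤ_[l]) • x = (l : R) * x := fun x => by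
    rw [Algebra.smul_def, map_natCast]
  have hmain : ∀ (e : Rˣ) (v : R), (e : R) = 1 + (l : R) * v →
      LL e = (l : R) * logDiv hl hR v - ψ (logDiv hl hR v) := by
    intro e v hev
    have hψe : ψ (e : R) = 1 + (l : R) * ψ v := by simp [hev]
    have hinv : Ring.inverse (ψ (e : R)) = ((Units.map (ψ : R →* R) e)⁻¹ : Rˣ) :=
      Ring.inverse_unit (Units.map (ψ : R →* R) e)
    have hcancel : ψ (e : R) * Ring.inverse (ψ (e : R)) = 1 := by
      rw [hinv]
      exact (Units.map (ψ : R →* R) e).mul_inv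
    obtain ⟨x, hx⟩ : (l : R) ∣ (1 + (l : R) * v) ^ l - 1 :=
      (Dvd.intro _ (by ring : (l : R) * v = 1 + (l : R) * v - 1)).trans
        (sub_one_dvd_pow_sub_one _ l)
    have hx' : (1 + (l : R) * v) ^ l = 1 + (l : R) * x := by linear_combination hx
    have ht : (e : R) ^ l * Ring.inverse (ψ (e : R)) - 1 =
        (l : R) * ((x - ψ v) * Ring.inverse (ψ (e : R))) := by
      rw [hψe] at hcancel ⊢
      rw [hev, hx']
      linear_combination hcancel
    have hLe : LL e = logDiv hl hR ((x - ψ v) * Ring.inverse (ψ (e : R))) := by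
      refine LL_eq_logDiv hl h fun k => ?_
      rw [hLL, ht]
    have hprod : (1 + (l : R) * ((x - ψ v) * Ring.inverse (ψ (e : R)))) * (1 + (l : R) * ψ v) =
        1 + (l : R) * x := by
      rw [← hψe]
      linear_combination (l : R) * (x - ψ v) * hcancel + hψe
    have hlog := logDiv_mul hl hR hprod
    rw [logDiv_pow hl hR l hx', ← map_logDiv] at hlog
    rw [hLe, hlog]
    ring
  simp only [hsmul]
  refine ⟨fun x y hxy => ?_, ?_⟩
  · refine sub_eq_zero.mp (eq_zero_of_mul_eq_psi hR (fun z hz => h.dvd_of_dvd_psi hgu hψ hz) ?_)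
    rw [map_sub]
    linear_combination hxy
  · ext y
    constructor
    · rintro ⟨x, rfl⟩
      obtain ⟨v, rfl⟩ := logDiv_surjective hl hR x
      obtain ⟨v', hv'⟩ := hR.exists_inverse v
      exact ⟨Units.mkOfMulEqOne _ _ hv', ⟨v, rfl⟩, hmain _ v rfl⟩
    · rintro ⟨e, ⟨v, hv⟩, rfl⟩
      exact ⟨logDiv hl hR v, (hmain e v hv).symm⟩
end

section
/- One has the internal direct sum decomposition of ℤ_l-modules Λ∧ = Ξ ⊕ (l−ψ)Λ∧: every x ∈ Λ∧ is uniquely the sum of an element of Ξ and an element of (l−ψ)Λ∧. -/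
/-!
Modulo `l`, the endomorphism `ψ` is the substitution `T ↦ T^l`, so `l - ψ` maps `Λ∧/l = 𝔽_l((T))`
isomorphically onto `𝔽_l((T^l))`, and the series with no exponent divisible by `l` form a
complement of that subspace.  Hence `(ξ, y) ↦ ξ + (l - ψ) y` is an isomorphism
`Ξ ⊕ Λ∧ → Λ∧` modulo `l`.  Since both sides are `l`-torsion free and `l`-adically complete and
separated, it is an isomorphism.

The congruence is `LaurentCoeffs.coeff_psi`.  It requires the series defining `ψ x` to converge,
which holds because `C m x → 0` as `m → -∞`, while `gu ^ m` has order at least `m` when `0 ≤ m`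
(`order_gu_pow`).  Completeness enters through `exists_tails`, which sums `∑ l^j y_j` together
with all its tails, and separatedness through `eq_zero_of_chain`.
-/

open Filter

set_option linter.unusedVariables false

/-- `C` is the family of coefficient functions of a ring `R` of two-sided series `∑ x_k T^k` over
`ℤ_l` with `x_k → 0` as `k → -∞`, and `Tu` is the (invertible) variable. -/
structure LaurentCoeffs (l : ℕ) [Fact (Nat.Prime l)] (R : Type) [CommRing R] [Algebra ℤ_[l] R]
    (C : ℤ → R → ℤ_[l]) (Tu : Rˣ) : Prop where
  ext : ∀ x y : R, (∀ k, C k x = C k y) → x = y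
  surj : ∀ f : ℤ → ℤ_[l], Tendsto f atBot (nhds 0) → ∃ x : R, ∀ k, C k x = f k
  tend : ∀ x : R, Tendsto (fun k => C k x) atBot (nhds 0)
  add : ∀ x y : R, ∀ k, C k (x + y) = C k x + C k y
  mul : ∀ x y : R, ∀ k, C k (x * y) = ∑' i : ℤ, C i x * C (k - i) y
  alg : ∀ (a : ℤ_[l]) (k : ℤ), C k (algebraMap ℤ_[l] R a) = if k = 0 then a else 0
  var : ∀ k, C k (Tu : R) = if k = 1 then 1 else 0

namespace LaurentCoeffs

variable {l : ℕ} [Fact (Nat.Prime l)] {R : Type} [CommRing R] [Algebra ℤ_[l] R]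
  {C : ℤ → R → ℤ_[l]} {Tu : Rˣ}

/-! ### Coefficients of elementary expressions -/

lemma coeff_zero (h : LaurentCoeffs l R C Tu) (k : ℤ) : C k 0 = 0 := by
  have := h.add 0 0 k
  simpa using this

lemma coeff_sub (h : LaurentCoeffs l R C Tu) (x y : R) (k : ℤ) :
    C k (x - y) = C k x - C k y := by
  have := h.add (x - y) y k
  rw [sub_add_cancel] at this
  rw [this]; ring

lemma coeff_l_mul (h : LaurentCoeffs l R C Tu) (x : R) (k : ℤ) :
    C k ((l : R) * x) = (l : ℤ_[l]) * C k x := by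
  have h1 : (l : R) = algebraMap ℤ_[l] R (l : ℤ_[l]) := by simp
  rw [h1, h.mul, tsum_eq_single 0]
  · rw [h.alg, if_pos rfl, sub_zero]
  · intro i hi
    rw [h.alg, if_neg hi, zero_mul]

lemma coeff_var_mul (h : LaurentCoeffs l R C Tu) (x : R) (k : ℤ) :
    C k ((Tu : R) * x) = C (k - 1) x := by
  rw [h.mul, tsum_eq_single 1]
  · simp [h.var]
  · intro i hi
    simp [h.var, hi]

lemma coeff_one (h : LaurentCoeffs l R C Tu) (k : ℤ) : C k 1 = if k = 0 then 1 else 0 := by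
  simpa using h.alg 1 k

lemma coeff_var_zpow (h : LaurentCoeffs l R C Tu) (n : ℤ) :
    ∀ k, C k ((Tu ^ n : Rˣ) : R) = if k = n then 1 else 0 := by
  induction n using Int.induction_on with
  | zero => intro k; simpa using h.coeff_one k
  | succ n ih =>
    intro k
    rw [add_comm, zpow_add, zpow_one, Units.val_mul, h.coeff_var_mul, ih]
    congr 1; apply propext; omega
  | pred n ih =>
    intro k
    have h1 : ((Tu ^ (-(n : ℤ)) : Rˣ) : R) = (Tu : R) * ((Tu ^ (-(n : ℤ) - 1) : Rˣ) : R) := by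
      rw [← Units.val_mul]
      nth_rewrite 2 [← zpow_one Tu]
      rw [← zpow_add]
      congr 2; ring
    have h2 := ih (k + 1)
    rw [h1, h.coeff_var_mul, add_sub_cancel_right] at h2
    rw [h2]
    congr 1; apply propext; omega

/-! ### Orders of vanishing -/

lemma order_mul (h : LaurentCoeffs l R C Tu) {x y : R} {i j : ℤ}
    (hx : ∀ k < i, C k x = 0) (hy : ∀ k < j, C k y = 0) : ∀ k < i + j, C k (x * y) = 0 := by
  intro k hk
  rw [h.mul]
  convert tsum_zero with m
  by_cases hm : m < i
  · rw [hx m hm, zero_mul]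
  · rw [hy _ (by omega), mul_zero]

lemma order_pow (h : LaurentCoeffs l R C Tu) {x : R} {i : ℤ}
    (hx : ∀ k < i, C k x = 0) (n : ℕ) : ∀ k < n * i, C k (x ^ n) = 0 := by
  induction n with
  | zero =>
    intro k hk
    simp only [Nat.cast_zero, zero_mul] at hk
    rw [pow_zero, h.coeff_one, if_neg hk.ne]
  | succ n ih =>
    rw [pow_succ]
    have := h.order_mul ih hx
    intro k hk
    refine this k ?_
    push_cast at hk
    linarith

lemma order_gu (h : LaurentCoeffs l R C Tu) :
    ∀ k < 1, C k ((1 + (Tu : R)) ^ l - 1) = 0 := by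
  have h1 : (1 + (Tu : R)) ^ l - 1 = (Tu : R) * ∑ i ∈ Finset.range l, (1 + (Tu : R)) ^ i := by
    have := mul_geom_sum (1 + (Tu : R)) l
    rw [← this]; ring
  have h2 : ∀ k < 0, C k (1 + (Tu : R)) = 0 := by
    intro k hk
    rw [h.add, h.coeff_one, h.var, if_neg (by omega), if_neg (by omega), add_zero]
  intro k hk
  rw [h1, h.coeff_var_mul]
  have h3 : ∀ n : ℕ, C (k - 1) (∑ i ∈ Finset.range n, (1 + (Tu : R)) ^ i) = 0 := by
    intro n
    induction n with
    | zero => simpa using h.coeff_zero _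
    | succ n ih =>
      rw [Finset.sum_range_succ, h.add, ih, zero_add]
      exact h.order_pow h2 n _ (by simp; omega)
  exact h3 l

lemma order_gu_pow (h : LaurentCoeffs l R C Tu) {gu : Rˣ}
    (hgu : (gu : R) = (1 + (Tu : R)) ^ l - 1) {k m : ℤ} (hm : 0 ≤ m) (hk : k < m) :
    C k ((gu ^ m : Rˣ) : R) = 0 := by
  lift m to ℕ using hm
  rw [zpow_natCast, Units.val_pow_eq_pow_val, hgu]
  exact h.order_pow h.order_gu m k (by simpa using hk)

/-! ### The endomorphism `ψ` modulo `l` -/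

/-- As units of `R / l`, the elements `gu` and `T ^ l` agree, hence so do their integral powers. -/
lemma gu_zpow {gu : Rˣ} (hgu : (gu : R) = (1 + (Tu : R)) ^ l - 1) (m : ℤ) :
    ∃ r : R, ((gu ^ m : Rˣ) : R) = ((Tu ^ ((l : ℤ) * m) : Rˣ) : R) + (l : R) * r := by
  have hp : Nat.Prime l := Fact.out
  let q := Ideal.Quotient.mk (Ideal.span {(l : R)})
  have hq : Units.map (q : R →* R ⧸ Ideal.span {(l : R)}) gu =
      Units.map (q : R →* R ⧸ Ideal.span {(l : R)}) (Tu ^ l) := by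
    ext
    simp only [Units.coe_map, MonoidHom.coe_coe]
    rw [Ideal.Quotient.eq, Ideal.mem_span_singleton, hgu, Units.val_pow_eq_pow_val]
    obtain ⟨r, hr⟩ := exists_add_pow_prime_eq hp (1 : R) (Tu : R)
    exact ⟨Tu * r, by rw [hr]; ring⟩
  have hq2 : q ((gu ^ m : Rˣ) : R) = q ((Tu ^ ((l : ℤ) * m) : Rˣ) : R) := by
    have := congrArg (fun u : (R ⧸ Ideal.span {(l : R)})ˣ => (u ^ m).val) hq
    simp only [← map_zpow] at this
    rw [zpow_mul, zpow_natCast]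
    exact this
  rw [Ideal.Quotient.eq, Ideal.mem_span_singleton] at hq2
  obtain ⟨r, hr⟩ := hq2
  exact ⟨r, by rw [← hr]; ring⟩

lemma summable_psi (h : LaurentCoeffs l R C Tu) {gu : Rˣ}
    (hgu : (gu : R) = (1 + (Tu : R)) ^ l - 1) (x : R) (k : ℤ) :
    Summable (fun m : ℤ => C m x * C k ((gu ^ m : Rˣ) : R)) := by
  apply NonarchimedeanAddGroup.summable_of_tendsto_cofinite_zero
  rw [Int.cofinite_eq, tendsto_sup]
  constructor
  · apply squeeze_zero_norm (a := fun m => ‖C m x‖)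
    · intro m
      rw [norm_mul]
      exact mul_le_of_le_one_right (norm_nonneg _) (PadicInt.norm_le_one _)
    · simpa using (h.tend x).norm
  · apply tendsto_const_nhds.congr'
    filter_upwards [eventually_gt_atTop k, eventually_ge_atTop 0] with m hm hm0
    rw [h.order_gu_pow hgu hm0 hm, mul_zero]

lemma dvd_iff_norm (a : ℤ_[l]) : (l : ℤ_[l]) ∣ a ↔ ‖a‖ ≤ (l : ℝ)⁻¹ := by
  have := PadicInt.norm_le_pow_iff_mem_span_pow a 1
  rw [pow_one, Ideal.mem_span_singleton] at this
  rw [← this]; simp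

/-- Modulo `l`, the series `ψ x` is `x (T ^ l)`. -/
lemma coeff_psi (h : LaurentCoeffs l R C Tu) {gu : Rˣ} {ψ : R →+* R}
    (hgu : (gu : R) = (1 + (Tu : R)) ^ l - 1)
    (hψ : ∀ (x : R) (k : ℤ), C k (ψ x) = ∑' m : ℤ, C m x * C k ((gu ^ m : Rˣ) : R))
    (x : R) (k : ℤ) :
    (l : ℤ_[l]) ∣ C k (ψ x) - (if (l : ℤ) ∣ k then C (k / l) x else 0) := by
  have hl0 : (l : ℤ) ≠ 0 := by exact_mod_cast (Fact.out : Nat.Prime l).ne_zero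
  -- the contribution of `T ^ (l * m)` to the coefficient at `k`
  set g : ℤ → ℤ_[l] := fun m => C m x * (if k = (l : ℤ) * m then 1 else 0) with hg
  have hg0 : ∀ m ≠ k / l, g m = 0 := by
    intro m hm
    simp only [hg]
    rw [if_neg, mul_zero]
    rintro rfl
    exact hm (by rw [Int.mul_ediv_cancel_left _ hl0])
  have hgs : HasSum g (if (l : ℤ) ∣ k then C (k / l) x else 0) := by
    convert hasSum_single (k / (l : ℤ)) hg0 using 1
    simp only [hg]
    by_cases hk : (l : ℤ) ∣ k
    · rw [if_pos hk, if_pos (Int.mul_ediv_cancel' hk).symm, mul_one]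
    · rw [if_neg hk, if_neg, mul_zero]
      intro h'
      exact hk ⟨_, h'⟩
  rw [hψ, ← hgs.tsum_eq, ← (h.summable_psi hgu x k).tsum_sub hgs.summable, dvd_iff_norm]
  apply IsUltrametricDist.norm_tsum_le_of_forall_le_of_nonneg (by positivity)
  intro m
  rw [← dvd_iff_norm]
  obtain ⟨r, hr⟩ := gu_zpow hgu m
  simp only [hg]
  rw [hr, h.add, h.coeff_var_zpow, h.coeff_l_mul]
  exact ⟨C m x * C k r, by ring⟩

/-! ### Division by `l`, separatedness and completeness -/

lemma exists_l_mul (h : LaurentCoeffs l R C Tu) {x : R} (hx : ∀ k, (l : ℤ_[l]) ∣ C k x) :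
    ∃ y : R, x = (l : R) * y := by
  have hl0 : (l : ℝ) ≠ 0 := by exact_mod_cast (Fact.out : Nat.Prime l).ne_zero
  choose f hf using hx
  have hft : Tendsto f atBot (nhds 0) := by
    rw [tendsto_zero_iff_norm_tendsto_zero]
    have h1 : (fun k => ‖f k‖) = fun k => (l : ℝ) * ‖C k x‖ := by
      funext k
      rw [hf k, norm_mul, PadicInt.norm_p, mul_inv_cancel_left₀ hl0]
    rw [h1]
    simpa using (h.tend x).norm.const_mul (l : ℝ)
  obtain ⟨y, hy⟩ := h.surj f hft
  exact ⟨y, h.ext _ _ fun k => by rw [h.coeff_l_mul, hy, hf]⟩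

lemma l_mul_cancel (h : LaurentCoeffs l R C Tu) {x y : R} (hxy : (l : R) * x = (l : R) * y) :
    x = y := by
  have hl0 : (l : ℤ_[l]) ≠ 0 := by exact_mod_cast (Fact.out : Nat.Prime l).ne_zero
  apply h.ext
  intro k
  have := congrArg (C k) hxy
  rw [h.coeff_l_mul, h.coeff_l_mul] at this
  exact mul_left_cancel₀ hl0 this

/-- `ℤ_l` is `l`-adically separated: an infinitely `l`-divisible element vanishes. -/
lemma eq_zero_of_chain (a : ℕ → ℤ_[l]) (ha : ∀ n, a n = (l : ℤ_[l]) * a (n + 1)) :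
    a 0 = 0 := by
  have hp : Nat.Prime l := Fact.out
  have h1 : ∀ n, ‖a 0‖ ≤ ((l : ℝ)⁻¹) ^ n := by
    intro n
    have h2 : a 0 = (l : ℤ_[l]) ^ n * a n := by
      induction n with
      | zero => simp
      | succ n ih => rw [ih, ha n]; ring
    rw [h2, norm_mul, norm_pow, PadicInt.norm_p]
    exact mul_le_of_le_one_right (by positivity) (PadicInt.norm_le_one _)
  have h3 : Tendsto (fun n : ℕ => ((l : ℝ)⁻¹) ^ n) atTop (nhds 0) :=
    tendsto_pow_atTop_nhds_zero_of_lt_one (by positivity)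
      (inv_lt_one_of_one_lt₀ (by exact_mod_cast hp.one_lt))
  exact norm_le_zero_iff.mp (ge_of_tendsto' h3 h1)

lemma eq_zero_of_chain' (h : LaurentCoeffs l R C Tu) (a : ℕ → R)
    (ha : ∀ n, a n = (l : R) * a (n + 1)) : a 0 = 0 := by
  apply h.ext
  intro k
  rw [h.coeff_zero]
  refine eq_zero_of_chain (fun n => C k (a n)) fun n => ?_
  rw [← h.coeff_l_mul, ← ha]

/-- `Y n` is the series `∑ j, l ^ j * y (n + j)`. -/
lemma exists_tails (h : LaurentCoeffs l R C Tu) (y : ℕ → R) :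
    ∃ Y : ℕ → R, ∀ n, Y n = y n + (l : R) * Y (n + 1) := by
  have hp : Nat.Prime l := Fact.out
  have hb : Summable (fun j : ℕ => ((l : ℝ)⁻¹) ^ j) :=
    summable_geometric_of_lt_one (by positivity)
      (inv_lt_one_of_one_lt₀ (by exact_mod_cast hp.one_lt))
  have hn : ∀ (j : ℕ) (a : ℤ_[l]), ‖(l : ℤ_[l]) ^ j * a‖ ≤ ((l : ℝ)⁻¹) ^ j := by
    intro j a
    rw [norm_mul, norm_pow, PadicInt.norm_p]
    exact mul_le_of_le_one_right (by positivity) (PadicInt.norm_le_one _)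
  have hs : ∀ (n : ℕ) (k : ℤ), Summable fun j : ℕ => (l : ℤ_[l]) ^ j * C k (y (n + j)) :=
    fun n k => Summable.of_norm_bounded hb fun j => hn j _
  have ht : ∀ n : ℕ, Tendsto (fun k : ℤ => ∑' j : ℕ, (l : ℤ_[l]) ^ j * C k (y (n + j)))
      atBot (nhds 0) := by
    intro n
    have := tendsto_tsum_of_dominated_convergence (𝓕 := atBot)
      (f := fun (k : ℤ) (j : ℕ) => (l : ℤ_[l]) ^ j * C k (y (n + j))) (g := fun _ => 0) hb
      (fun j => by simpa using (h.tend (y (n + j))).const_mul ((l : ℤ_[l]) ^ j))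
      (Eventually.of_forall fun k j => hn j _)
    simpa using this
  choose Y hY using fun n => h.surj _ (ht n)
  refine ⟨Y, fun n => h.ext _ _ fun k => ?_⟩
  rw [h.add, h.coeff_l_mul, hY, hY, (hs n k).tsum_eq_zero_add, ← (hs (n + 1) k).tsum_mul_left]
  congr 1
  · simp
  · refine tsum_congr fun j => ?_
    rw [pow_succ', mul_assoc, add_assoc, add_comm 1 j]

/-! ### The decomposition -/

/-- Injectivity modulo `l`, followed by division by `l`. -/
lemma uniq_step (h : LaurentCoeffs l R C Tu) {gu : Rˣ} {ψ : R →+* R}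
    (hgu : (gu : R) = (1 + (Tu : R)) ^ l - 1)
    (hψ : ∀ (x : R) (k : ℤ), C k (ψ x) = ∑' m : ℤ, C m x * C k ((gu ^ m : Rˣ) : R))
    {z y : R} (hz : ∀ k : ℤ, (l : ℤ) ∣ k → C k z = 0) (he : z + ((l : R) * y - ψ y) = 0) :
    ∃ z' y' : R, (∀ k : ℤ, (l : ℤ) ∣ k → C k z' = 0) ∧ z' + ((l : R) * y' - ψ y') = 0 ∧
      y = (l : R) * y' := by
  have hl0 : (l : ℤ) ≠ 0 := by exact_mod_cast (Fact.out : Nat.Prime l).ne_zero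
  have hl0' : (l : ℤ_[l]) ≠ 0 := by exact_mod_cast (Fact.out : Nat.Prime l).ne_zero
  have hy : ∀ k, (l : ℤ_[l]) ∣ C k y := by
    intro k
    have h1 := h.coeff_psi hgu hψ y (l * k)
    rw [if_pos (dvd_mul_right _ _), Int.mul_ediv_cancel_left _ hl0] at h1
    have h2 : C (l * k) (ψ y) = (l : ℤ_[l]) * C (l * k) y := by
      have h3 : ψ y = z + (l : R) * y := by linear_combination -he
      rw [h3, h.add, hz _ (dvd_mul_right _ _), zero_add, h.coeff_l_mul]
    rw [h2] at h1
    exact (dvd_sub_right (dvd_mul_right _ _)).mp h1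
  obtain ⟨y', rfl⟩ := h.exists_l_mul hy
  have hz' : z = (l : R) * (ψ y' - (l : R) * y') := by
    rw [map_mul, map_natCast] at he
    linear_combination he
  refine ⟨ψ y' - (l : R) * y', y', ?_, by ring, rfl⟩
  intro k hk
  have := hz k hk
  rw [hz', h.coeff_l_mul] at this
  exact (mul_eq_zero.mp this).resolve_left hl0'

lemma uniq (h : LaurentCoeffs l R C Tu) {gu : Rˣ} {ψ : R →+* R}
    (hgu : (gu : R) = (1 + (Tu : R)) ^ l - 1)
    (hψ : ∀ (x : R) (k : ℤ), C k (ψ x) = ∑' m : ℤ, C m x * C k ((gu ^ m : Rˣ) : R))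
    {z y : R} (hz : ∀ k : ℤ, (l : ℤ) ∣ k → C k z = 0) (he : z + ((l : R) * y - ψ y) = 0) :
    y = 0 := by
  let S := {p : R × R // (∀ k : ℤ, (l : ℤ) ∣ k → C k p.1 = 0) ∧
    p.1 + ((l : R) * p.2 - ψ p.2) = 0}
  have hS : ∀ p : S, ∃ q : S, p.1.2 = (l : R) * q.1.2 := by
    rintro ⟨⟨z, y⟩, hz, he⟩
    obtain ⟨z', y', h1, h2, h3⟩ := h.uniq_step hgu hψ hz he
    exact ⟨⟨⟨z', y'⟩, h1, h2⟩, h3⟩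
  choose F hF using hS
  refine h.eq_zero_of_chain' (fun n => (F^[n] ⟨⟨z, y⟩, hz, he⟩).1.2) fun n => ?_
  rw [Function.iterate_succ_apply']
  exact hF _

/-- Surjectivity modulo `l`. -/
lemma exists_step (h : LaurentCoeffs l R C Tu) {gu : Rˣ} {ψ : R →+* R}
    (hgu : (gu : R) = (1 + (Tu : R)) ^ l - 1)
    (hψ : ∀ (x : R) (k : ℤ), C k (ψ x) = ∑' m : ℤ, C m x * C k ((gu ^ m : Rˣ) : R))
    (x : R) :
    ∃ z y x' : R, (∀ k : ℤ, (l : ℤ) ∣ k → C k z = 0) ∧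
      x = z + ((l : R) * y - ψ y) + (l : R) * x' := by
  have hp : Nat.Prime l := Fact.out
  have hl0 : (l : ℤ) ≠ 0 := by exact_mod_cast hp.ne_zero
  obtain ⟨z, hz⟩ := h.surj (fun k => if (l : ℤ) ∣ k then 0 else C k x) (by
    apply squeeze_zero_norm (a := fun m => ‖C m x‖)
    · intro m
      split_ifs <;> simp
    · simpa using (h.tend x).norm)
  obtain ⟨y, hy⟩ := h.surj (fun k => - C (l * k) x) (by
    have h1 : Tendsto (fun k : ℤ => (l : ℤ) * k) atBot atBot := by
      refine tendsto_atBot_mono' _ ?_ tendsto_id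
      filter_upwards [eventually_le_atBot 0] with k hk
      have : (1 : ℤ) ≤ l := by exact_mod_cast hp.one_lt.le
      simp only [id]
      nlinarith
    simpa using ((h.tend x).comp h1).neg)
  have hd : ∀ k, (l : ℤ_[l]) ∣ C k (x - z - ((l : R) * y - ψ y)) := by
    intro k
    obtain ⟨c, hc⟩ := h.coeff_psi hgu hψ y k
    rw [h.coeff_sub, h.coeff_sub, h.coeff_sub, h.coeff_l_mul, sub_eq_iff_eq_add.mp hc, hz]
    by_cases hk : (l : ℤ) ∣ k
    · rw [if_pos hk, if_pos hk, hy (k / l), Int.mul_ediv_cancel' hk]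
      exact ⟨c - C k y, by ring⟩
    · rw [if_neg hk, if_neg hk]
      exact ⟨c - C k y, by ring⟩
  obtain ⟨x', hx'⟩ := h.exists_l_mul hd
  exact ⟨z, y, x', fun k hk => by rw [hz, if_pos hk], by rw [← hx']; ring⟩

lemma exists_decomp (h : LaurentCoeffs l R C Tu) {gu : Rˣ} {ψ : R →+* R}
    (hgu : (gu : R) = (1 + (Tu : R)) ^ l - 1)
    (hψ : ∀ (x : R) (k : ℤ), C k (ψ x) = ∑' m : ℤ, C m x * C k ((gu ^ m : Rˣ) : R))
    (x : R) :
    ∃ z y : R, (∀ k : ℤ, (l : ℤ) ∣ k → C k z = 0) ∧ x = z + ((l : R) * y - ψ y) := by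
  choose fz fy fx hfz hfx using h.exists_step hgu hψ
  -- successive remainders: `X n` is `x` minus its approximation modulo `l ^ n`, over `l ^ n`
  let X : ℕ → R := fun n => fx^[n] x
  have hX : ∀ n, X (n + 1) = fx (X n) := fun n => Function.iterate_succ_apply' _ _ _
  obtain ⟨Z, hZ⟩ := h.exists_tails fun n => fz (X n)
  obtain ⟨Y, hY⟩ := h.exists_tails fun n => fy (X n)
  refine ⟨Z 0, Y 0, fun k hk => ?_, ?_⟩
  · refine eq_zero_of_chain (fun n => C k (Z n)) fun n => ?_
    rw [hZ n, h.add, hfz _ k hk, zero_add, h.coeff_l_mul]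
  · have := h.eq_zero_of_chain' (fun n => X n - (Z n + ((l : R) * Y n - ψ (Y n)))) fun n => by
      have h1 := hfx (X n)
      rw [← hX] at h1
      have h2 : ψ (Y n) = ψ (fy (X n)) + (l : R) * ψ (Y (n + 1)) := by
        rw [hY n, map_add, map_mul, map_natCast]
      rw [h2]
      linear_combination h1 - hZ n - (l : R) * hY n
    exact sub_eq_zero.mp this

end LaurentCoeffs

/-- **Lemma 2 (2).**  `Λ∧ = Ξ ⊕ (l − ψ)Λ∧` as `ℤ_l`-modules:  every `x ∈ Λ∧` is
uniquely the sum of an element of `Ξ = {∑ x_k T^k : x_k = 0 whenever l ∣ k}` and an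
element of `(l − ψ)Λ∧`. -/
theorem statement10 (l : ℕ) [Fact (Nat.Prime l)] (hl : Odd l)
    -- `R` is the ring `Λ∧ = ℤ_l{{T}}`, the `l`-adic completion of the localization
    -- of `Λ = ℤ_l[[T]]` at the prime ideal `lΛ`, described concretely through its
    -- coefficient functions `C k : Λ∧ → ℤ_l` (`x = ∑_{k ∈ ℤ} (C k x)·T^k`,
    -- `C k x → 0` l-adically as `k → −∞`).
    (R : Type) [CommRing R] [Algebra ℤ_[l] R]
    (C : ℤ → R → ℤ_[l]) (Tu gu : Rˣ) (ψ : R →+* R)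
    (hext : ∀ x y : R, (∀ k, C k x = C k y) → x = y)
    (hsurj : ∀ f : ℤ → ℤ_[l], Tendsto f atBot (nhds 0) → ∃ x : R, ∀ k, C k x = f k)
    (htend : ∀ x : R, Tendsto (fun k => C k x) atBot (nhds 0))
    (hadd : ∀ x y : R, ∀ k, C k (x + y) = C k x + C k y)
    (hmul : ∀ x y : R, ∀ k, C k (x * y) = ∑' i : ℤ, C i x * C (k - i) y)
    (halg : ∀ (a : ℤ_[l]) (k : ℤ),
      C k (algebraMap ℤ_[l] R a) = if k = 0 then a else 0)
    (hT : ∀ k, C k (Tu : R) = if k = 1 then 1 else 0)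
    (hgu : (gu : R) = (1 + (Tu : R)) ^ l - 1)
    (hψ : ∀ (x : R) (k : ℤ),
      C k (ψ x) = ∑' m : ℤ, C m x * C k ((gu ^ m : Rˣ) : R)) :
    ∀ x : R, ∃! p : R × R,
      (∀ k : ℤ, (l : ℤ) ∣ k → C k p.1 = 0) ∧
      (∃ y : R, p.2 = (l : ℤ_[l]) • y - ψ y) ∧
      x = p.1 + p.2 := by
  have h : LaurentCoeffs l R C Tu := ⟨hext, hsurj, htend, hadd, hmul, halg, hT⟩
  have hs : ∀ y : R, (l : ℤ_[l]) • y = (l : R) * y := fun y => by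
    rw [Algebra.smul_def, map_natCast]
  intro x
  obtain ⟨z, y, hz, hx⟩ := h.exists_decomp hgu hψ x
  refine ⟨(z, (l : R) * y - ψ y), ⟨hz, ⟨y, by rw [hs]⟩, hx⟩, ?_⟩
  rintro ⟨z', w'⟩ ⟨hz', ⟨y', hy'⟩, hx'⟩
  simp only at hz' hy' hx'
  rw [hs] at hy'
  have he : (z' - z) + ((l : R) * (y' - y) - ψ (y' - y)) = 0 := by
    rw [map_sub]
    linear_combination hx - hx' - hy'
  have hyy : y' = y := by
    refine sub_eq_zero.mp (h.uniq hgu hψ (fun k hk => ?_) he)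
    rw [h.coeff_sub, hz' k hk, hz k hk, sub_zero]
  subst hyy
  have hzz : z' = z := by
    rw [sub_self, map_zero, mul_zero, sub_zero, add_zero] at he
    exact sub_eq_zero.mp he
  rw [hzz, hy']
end

section
/- Let F = 𝔽_l((T)) be the field of formal Laurent series over the field with l elements, and let φ : F → F, φ(x) = x^l, be the Frobenius. Then the kernel of the additive map 1−φ : F → F is exactly 𝔽_l (the constants), and the cokernel F/(1−φ)(F) is an 𝔽_l-vector space for which the images of the monomials T^j, with j = 0 or with j < 0 and l ∤ j, form a basis. -/
/-!
Because `c ^ l = c` in `𝔽_l`, the Frobenius sends `∑ aₙ Tⁿ` to `∑ aₙ T^{ln}`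
(`coeff_pow_mul`, `coeff_pow_of_not_dvd`, reduced to the corresponding fact for power series).
So `x - x ^ l = y` amounts to the recursion `xₙ - x_{n/l} = yₙ`, where the second term is present
only if `l ∣ n`. Everything is read off from this recursion along the chains `j, jl, jl², …`.

* Kernel: if `y = 0`, dividing `n ≠ 0` by `l` as long as possible shows `xₙ = 0`.
* Independence: if `y` is a combination `∑ c_j T^j` of the given monomials, then `y₀ = x₀ - x₀ = 0`,
  and for `j < 0` prime to `l` the coefficients of `x` at `j, jl, jl², …` all equal `c_j`;
  as the support of `x` is bounded below, `c_j = 0`.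
* Spanning: a series with only positive exponents lies in the image of `1 - φ`
  (solve the recursion upwards from `0`), and `T^{ln} ≡ T^n` modulo this image, which
  reduces each of the finitely many remaining monomials to one with exponent `0` or prime to `l`.
-/

open HahnSeries

namespace ArtinSchreier

variable {l : ℕ} [hp : Fact (Nat.Prime l)]

instance : CharP (LaurentSeries (ZMod l)) l :=
  charP_of_injective_ringHom (f := (HahnSeries.C : ZMod l →+* LaurentSeries (ZMod l)))
    HahnSeries.C_injective l

lemma powerSeries_pow (f : PowerSeries (ZMod l)) : f ^ l = f.expand l hp.out.ne_zero := by
  have h := MvPowerSeries.map_frobenius_expand l hp.out.ne_zero (f := f)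
  rw [ZMod.frobenius_zmod, MvPowerSeries.map_id] at h
  exact h.symm

lemma coeff_pow_aux (x : LaurentSeries (ZMod l)) (n : ℤ) :
    (x ^ l).coeff n =
      ((x.powerSeriesPart.expand l hp.out.ne_zero : PowerSeries (ZMod l)) :
        LaurentSeries (ZMod l)).coeff (n - l * x.order) := by
  conv_lhs => rw [← x.single_order_mul_powerSeriesPart]
  rw [mul_pow, ← PowerSeries.coe_pow, powerSeries_pow, single_pow, coeff_single_mul]
  simp

lemma coeff_pow_mul (x : LaurentSeries (ZMod l)) (m : ℤ) :
    (x ^ l).coeff (l * m) = x.coeff m := by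
  have hl : (0 : ℤ) < l := by exact_mod_cast hp.out.pos
  rw [coeff_pow_aux, ← mul_sub]
  rcases lt_or_ge m x.order with h | h
  · rw [PowerSeries.coeff_coe, if_pos (by nlinarith), coeff_eq_zero_of_lt_order h]
  · obtain ⟨k, hk⟩ := Int.eq_ofNat_of_zero_le (sub_nonneg.2 h)
    rw [hk, show (l : ℤ) * (k : ℤ) = ((l * k : ℕ) : ℤ) by push_cast; rfl,
      LaurentSeries.coeff_coe_powerSeries, PowerSeries.coeff_expand_mul,
      LaurentSeries.powerSeriesPart_coeff, ← hk]
    congr 1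
    ring

lemma coeff_pow_of_not_dvd (x : LaurentSeries (ZMod l)) {n : ℤ} (hn : ¬ (l : ℤ) ∣ n) :
    (x ^ l).coeff n = 0 := by
  rw [coeff_pow_aux, PowerSeries.coeff_coe]
  split_ifs with h
  · rfl
  · refine PowerSeries.coeff_expand_of_not_dvd _ _ _ fun hd => hn ?_
    have := Int.natCast_dvd.2 hd
    exact (dvd_sub_left (dvd_mul_right _ _)).1 this

lemma coeff_pow_zero (x : LaurentSeries (ZMod l)) : (x ^ l).coeff 0 = x.coeff 0 := by
  simpa using coeff_pow_mul x 0

/-- Induction along the chains `j, jl, jl², …` of nonzero integers, starting at `j` prime to `l`. -/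
lemma chain_induction {P : ℤ → Prop} (h₀ : ∀ n, ¬ (l : ℤ) ∣ n → P n)
    (h₁ : ∀ n, n ≠ 0 → P n → P (l * n)) {n : ℤ} (hn : n ≠ 0) : P n := by
  induction hk : n.natAbs using Nat.strong_induction_on generalizing n with
  | _ k ih =>
    by_cases hd : (l : ℤ) ∣ n
    · obtain ⟨m, rfl⟩ := hd
      have hm : m ≠ 0 := right_ne_zero_of_mul hn
      refine h₁ m hm (ih m.natAbs ?_ hm rfl)
      rw [← hk, Int.natAbs_mul, Int.natAbs_natCast]
      have := Int.natAbs_pos.2 hm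
      nlinarith [hp.out.two_le]
    · exact h₀ n hd

lemma kernel_eq : {x : LaurentSeries (ZMod l) | x - x ^ l = 0} =
    Set.range (HahnSeries.C : ZMod l →+* LaurentSeries (ZMod l)) := by
  ext x
  simp only [Set.mem_ofPred_eq, Set.mem_range, sub_eq_zero]
  constructor
  · intro hx
    refine ⟨x.coeff 0, ?_⟩
    ext n
    rw [HahnSeries.C_apply]
    rcases eq_or_ne n 0 with rfl | hn
    · simp
    · rw [coeff_single_of_ne hn]
      refine (chain_induction (l := l) (P := fun n => x.coeff n = 0) ?_ ?_ hn).symm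
      · intro n hd
        rw [hx, coeff_pow_of_not_dvd x hd]
      · intro n _ h
        rw [hx, coeff_pow_mul, h]
  · rintro ⟨c, rfl⟩
    rw [← map_pow, ZMod.pow_card]

/-- The operator `1 - φ`; it is `𝔽_l`-linear because `c ^ l = c` for `c ∈ 𝔽_l`. -/
noncomputable def oneSubFrob (l : ℕ) [Fact (Nat.Prime l)] :
    LaurentSeries (ZMod l) →ₗ[ZMod l] LaurentSeries (ZMod l) where
  toFun x := x - x ^ l
  map_add' x y := by rw [add_pow_char]; ring
  map_smul' c x := by
    simp only [← HahnSeries.C_mul_eq_smul, mul_pow, ← map_pow, ZMod.pow_card, RingHom.id_apply,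
      mul_sub]

lemma span_range_eq : Submodule.span (ZMod l)
    (Set.range (fun x : LaurentSeries (ZMod l) => x - x ^ l)) = LinearMap.range (oneSubFrob l) := by
  rw [show Set.range (fun x : LaurentSeries (ZMod l) => x - x ^ l) =
    (LinearMap.range (oneSubFrob l) : Set (LaurentSeries (ZMod l))) from rfl, Submodule.span_eq]

/-- A series in the image of `1 - φ` whose coefficients at negative multiples of `l` vanish has no
terms of exponent `≤ 0` at all. -/
lemma coeff_eq_zero_of_mem_range (x : LaurentSeries (ZMod l))
    (hx : ∀ n : ℤ, n < 0 → (x - x ^ l).coeff (l * n) = 0) {j : ℤ}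
    (hj : j = 0 ∨ (j < 0 ∧ ¬ (l : ℤ) ∣ j)) : (x - x ^ l).coeff j = 0 := by
  rcases hj with rfl | ⟨hj, hd⟩
  · rw [coeff_sub, coeff_pow_zero, sub_self]
  rw [coeff_sub, coeff_pow_of_not_dvd x hd, sub_zero]
  have hl : (2 : ℤ) ≤ l := by exact_mod_cast hp.out.two_le
  -- The coefficient of `x` is constant along the chain, which leaves every lower bound.
  have key : ∀ k : ℕ, ∃ m : ℤ, m < 0 ∧ m ≤ -k ∧ x.coeff m = x.coeff j := by
    intro k
    induction k with
    | zero => exact ⟨j, hj, by simpa using hj.le, rfl⟩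
    | succ k ih =>
      obtain ⟨m, hm, hmk, h⟩ := ih
      refine ⟨l * m, by nlinarith, by push_cast; nlinarith, ?_⟩
      have := hx m hm
      rw [coeff_sub, coeff_pow_mul, sub_eq_zero] at this
      rw [this, h]
  obtain ⟨m, -, hm, h⟩ := key (x.order.natAbs + 1)
  rw [← h]
  exact coeff_eq_zero_of_lt_order (by push_cast at hm; have := neg_abs_le x.order; lia)

/-- The solution of the recursion `xₙ = yₙ + x_{n/l}` on `ℕ`, the second term being present
only when `n` is a positive multiple of `l`. -/
def solve (l : ℕ) [hp : Fact (Nat.Prime l)] (y : ℕ → ZMod l) (n : ℕ) : ZMod l :=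
  if h : 0 < n ∧ l ∣ n then y n + solve l y (n / l) else y n
termination_by n
decreasing_by exact Nat.div_lt_self h.1 hp.out.one_lt

lemma mem_range_of_pos (y : LaurentSeries (ZMod l)) (hy : ∀ n ≤ 0, y.coeff n = 0) :
    y ∈ LinearMap.range (oneSubFrob l) := by
  have hl : (0 : ℤ) < l := by exact_mod_cast hp.out.pos
  let x : LaurentSeries (ZMod l) :=
    ((PowerSeries.mk (solve l fun n => y.coeff n) : PowerSeries (ZMod l)) :
      LaurentSeries (ZMod l))
  have hneg : ∀ n : ℤ, n < 0 → x.coeff n = 0 := fun n hn => by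
    simp only [x, PowerSeries.coeff_coe, if_pos hn]
  have hnat : ∀ n : ℕ, x.coeff n = solve l (fun n => y.coeff n) n := fun n => by
    simp only [x, LaurentSeries.coeff_coe_powerSeries, PowerSeries.coeff_mk]
  refine ⟨x, ?_⟩
  change x - x ^ l = y
  ext n
  rw [coeff_sub]
  rcases lt_trichotomy n 0 with hn | rfl | hn
  · rw [hy n hn.le, hneg n hn, zero_sub, neg_eq_zero]
    by_cases hd : (l : ℤ) ∣ n
    · obtain ⟨m, rfl⟩ := hd
      rw [coeff_pow_mul, hneg m (by nlinarith)]
    · exact coeff_pow_of_not_dvd x hd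
  · rw [coeff_pow_zero, sub_self, hy 0 le_rfl]
  · obtain ⟨k, rfl⟩ := Int.eq_ofNat_of_zero_le hn.le
    have hk : 0 < k := by exact_mod_cast hn
    by_cases hd : l ∣ k
    · obtain ⟨m, rfl⟩ := hd
      rw [hnat, solve, dif_pos ⟨hk, dvd_mul_right _ _⟩, Nat.mul_div_cancel_left _ hp.out.pos,
        ← hnat m, Nat.cast_mul, coeff_pow_mul, add_sub_cancel_right]
    · rw [coeff_pow_of_not_dvd x (by exact_mod_cast hd), hnat, solve,
        dif_neg (fun h => hd h.2), sub_zero]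

end ArtinSchreier

open ArtinSchreier

/-- **Frobenius on `𝔽_l((T))`.**  Let `F = 𝔽_l((T))` and `φ(x) = x^l` the Frobenius.
The kernel of the additive map `1 − φ : F → F` is exactly the constants `𝔽_l`, and
in the cokernel `F/(1−φ)(F)` the images of the monomials `T^j`, for `j = 0` or
(`j < 0` and `l ∤ j`), form a basis over `𝔽_l`. -/
theorem statement15 (l : ℕ) [Fact (Nat.Prime l)] (hl : Odd l) :
    {x : LaurentSeries (ZMod l) | x - x ^ l = 0} =
      Set.range (HahnSeries.C : ZMod l →+* LaurentSeries (ZMod l)) ∧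
    LinearIndependent (ZMod l)
      (fun j : {j : ℤ // j = 0 ∨ (j < 0 ∧ ¬ (l : ℤ) ∣ j)} =>
        Submodule.Quotient.mk (p := Submodule.span (ZMod l)
            (Set.range (fun x : LaurentSeries (ZMod l) => x - x ^ l)))
          (HahnSeries.single (j : ℤ) (1 : ZMod l))) ∧
    Submodule.span (ZMod l)
      (Set.range (fun j : {j : ℤ // j = 0 ∨ (j < 0 ∧ ¬ (l : ℤ) ∣ j)} =>
        Submodule.Quotient.mk (p := Submodule.span (ZMod l)
            (Set.range (fun x : LaurentSeries (ZMod l) => x - x ^ l)))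
          (HahnSeries.single (j : ℤ) (1 : ZMod l)))) = ⊤ := by
  refine ⟨kernel_eq, ?_, ?_⟩
  · rw [linearIndependent_iff']
    intro s g hg i hi
    simp only [← Submodule.mkQ_apply, ← map_smul] at hg
    rw [← map_sum, Submodule.mkQ_apply, Submodule.Quotient.mk_eq_zero, span_range_eq] at hg
    obtain ⟨x, hx⟩ := hg
    change x - x ^ l = _ at hx
    have hco : ∀ n : ℤ, (x - x ^ l).coeff n = ∑ j ∈ s, if n = j then g j else 0 := by
      intro n
      rw [hx, coeff_sum]
      refine Finset.sum_congr rfl fun j _ => ?_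
      rw [coeff_smul, coeff_single]
      split_ifs <;> simp
    have h0 := coeff_eq_zero_of_mem_range x (fun n hn => ?_) i.2
    · rw [hco, Finset.sum_eq_single i] at h0
      · simpa using h0
      · intro j _ hji
        exact if_neg fun h => hji (Subtype.ext h.symm)
      · exact fun h => absurd hi h
    · rw [hco]
      refine Finset.sum_eq_zero fun j _ => if_neg fun h => ?_
      have hlpos : (0 : ℤ) < l := by exact_mod_cast (Fact.out : l.Prime).pos
      rcases j.2 with h' | ⟨-, h'⟩
      · rw [h'] at h
        nlinarith
      · exact h' (h ▸ dvd_mul_right _ _)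
  · set N := Submodule.span (ZMod l)
      (Set.range (fun x : LaurentSeries (ZMod l) => x - x ^ l)) with hN
    set S := Submodule.span (ZMod l)
      (Set.range (fun j : {j : ℤ // j = 0 ∨ (j < 0 ∧ ¬ (l : ℤ) ∣ j)} =>
        Submodule.Quotient.mk (p := N) (HahnSeries.single (j : ℤ) (1 : ZMod l)))) with hS
    have hbase : ∀ j : ℤ, (j = 0 ∨ (j < 0 ∧ ¬ (l : ℤ) ∣ j)) →
        N.mkQ (single j (1 : ZMod l)) ∈ S := fun j hj =>
      Submodule.subset_span ⟨⟨j, hj⟩, rfl⟩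
    have hmono : ∀ n : ℤ, n ≤ 0 → N.mkQ (single n (1 : ZMod l)) ∈ S := by
      intro n hn
      rcases eq_or_ne n 0 with rfl | h0
      · exact hbase 0 (Or.inl rfl)
      refine chain_induction (l := l)
        (P := fun n => n ≤ 0 → N.mkQ (single n (1 : ZMod l)) ∈ S) ?_ ?_ h0 hn
      · intro n hd hn
        refine hbase n (Or.inr ⟨lt_of_le_of_ne hn ?_, hd⟩)
        rintro rfl
        exact hd (dvd_zero _)
      · intro n _ ih hn
        have hlpos : (0 : ℤ) < l := by exact_mod_cast (Fact.out : l.Prime).pos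
        have heq : N.mkQ (single n (1 : ZMod l)) = N.mkQ (single (l * n) (1 : ZMod l)) := by
          rw [Submodule.mkQ_apply, Submodule.mkQ_apply, Submodule.Quotient.eq]
          refine Submodule.subset_span ⟨single n 1, ?_⟩
          simp [single_pow]
        rw [← heq]
        exact ih (by nlinarith)
    rw [eq_top_iff]
    rintro q -
    obtain ⟨y, rfl⟩ := N.mkQ_surjective q
    set z : LaurentSeries (ZMod l) :=
      ∑ n ∈ Finset.Icc y.order 0, y.coeff n • single n (1 : ZMod l) with hz
    have hzS : N.mkQ z ∈ S := by
      rw [hz, map_sum]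
      refine Submodule.sum_mem _ fun n hn => ?_
      rw [map_smul]
      exact S.smul_mem _ (hmono n (Finset.mem_Icc.1 hn).2)
    have hyz : y - z ∈ N := by
      rw [hN, span_range_eq]
      refine mem_range_of_pos _ fun n hn => ?_
      have : z.coeff n = ∑ m ∈ Finset.Icc y.order 0, if n = m then y.coeff m else 0 := by
        rw [hz, coeff_sum]
        refine Finset.sum_congr rfl fun j _ => ?_
        rw [coeff_smul, coeff_single]
        split_ifs <;> simp
      rw [coeff_sub, this, Finset.sum_ite_eq]
      split_ifs with h
      · exact sub_self _
      · rw [sub_zero]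
        exact coeff_eq_zero_of_lt_order (by
          by_contra hlt
          exact h (Finset.mem_Icc.2 ⟨not_lt.1 hlt, hn⟩))
    have : N.mkQ y = N.mkQ z := by
      rw [Submodule.mkQ_apply, Submodule.mkQ_apply, Submodule.Quotient.eq]
      exact hyz
    rw [this]
    exact hzS
end

section
/- The sequence 0 → ℤ_l → Λ∧ →(1−ψ)→ Λ∧ → (Ξ/Ξ₁) ⊕ ℤ_l → 0 is exact; explicitly: the kernel of 1−ψ : Λ∧ → Λ∧ is exactly the constants ℤ_l, and the ℤ_l-linear map (Ξ ∩ Λ∧⁻) ⊕ ℤ_l → Λ∧/(1−ψ)Λ∧ sending (x, c) to the class of x + c is an isomorphism onto the cokernel of 1−ψ (note Ξ/Ξ₁ ≅ Ξ ∩ Λ∧⁻ since Ξ = (Ξ ∩ Λ∧⁻) ⊕ Ξ₁). -/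
/-!
Modulo `l` the ring `Λ∧` becomes `𝔽_l((T))`, and since `(1 + T) ^ l - 1 ≡ T ^ l`, the endomorphism
`ψ` becomes `∑ x_m T ^ m ↦ ∑ x_m T ^ (l m)` (`psi_mod_mul`, `psi_mod_not_dvd`). For this map the
equation `v + (1 - ψ) y = z`, with `v` supported on `{0}` and the negative integers prime to `l`,
is solved coefficientwise: for `k > 0` one has `y_k = z_k + y_{k/l}`, for `k < 0` one has
`y_k = y_{lk} - z_{lk}`, a recursion that stops because the coefficients vanish modulo `l` near
`-∞`, and then `v` is determined. So modulo `l` a solution exists (`surj_mod`), and for `z = 0`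
it must have `v = 0` and `y` constant (`ker_mod`).

Both statements lift to `Λ∧`. It has no `l`-torsion, constants are fixed by `ψ`, and hence a
solution of the homogeneous equation can be divided by `l` after removing the constant term
of `y`; repeating this shows that `v` and the nonconstant part of `y` are divisible by all powers
of `l`, so vanish (`ker_pow`, `ker_eq`). Existence follows by successive approximation, because
the series `∑ l ^ i u_i` converge (`exists_sum`, `surj_eq`).

Throughout, a pair `(x, c) ∈ (Ξ ∩ Λ∧⁻) ⊕ ℤ_l` is represented by the single element `v = x + c`,
that is, by the condition `C k v = 0` for all `k ≠ 0` with `l ∣ k` or `0 ≤ k`.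
-/

open Filter

set_option linter.unusedVariables false

/-- The hypotheses describing `R = Λ∧` by its coefficient functions `C k`, together with the
endomorphism `ψ`, the unit `Tu = T` and the unit `gu = ψ(T) = (1 + T) ^ l - 1`. -/
structure IsCoeffRing (l : ℕ) [Fact (Nat.Prime l)] (R : Type) [CommRing R] [Algebra ℤ_[l] R]
    (C : ℤ → R → ℤ_[l]) (Tu gu : Rˣ) (ψ : R →+* R) : Prop where
  ext : ∀ x y : R, (∀ k, C k x = C k y) → x = y
  surj : ∀ f : ℤ → ℤ_[l], Tendsto f atBot (nhds 0) → ∃ x : R, ∀ k, C k x = f k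
  tend : ∀ x : R, Tendsto (fun k => C k x) atBot (nhds 0)
  add : ∀ x y : R, ∀ k, C k (x + y) = C k x + C k y
  mul : ∀ x y : R, ∀ k, C k (x * y) = ∑' i : ℤ, C i x * C (k - i) y
  alg : ∀ (a : ℤ_[l]) (k : ℤ), C k (algebraMap ℤ_[l] R a) = if k = 0 then a else 0
  T : ∀ k, C k (Tu : R) = if k = 1 then 1 else 0
  gu_eq : (gu : R) = (1 + (Tu : R)) ^ l - 1
  psi : ∀ (x : R) (k : ℤ), C k (ψ x) = ∑' m : ℤ, C m x * C k ((gu ^ m : Rˣ) : R)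

namespace IsCoeffRing

variable {l : ℕ} [Fact (Nat.Prime l)] {R : Type} [CommRing R] [Algebra ℤ_[l] R]
    {C : ℤ → R → ℤ_[l]} {Tu gu : Rˣ} {ψ : R →+* R}

/-! ### Coefficients of sums, scalar multiples and powers of `T` -/

lemma zero (h : IsCoeffRing l R C Tu gu ψ) (k : ℤ) : C k 0 = 0 := by
  simpa using h.add 0 0 k

lemma neg (h : IsCoeffRing l R C Tu gu ψ) (x : R) (k : ℤ) : C k (-x) = -C k x := by
  have := h.add x (-x) k
  rw [add_neg_cancel, h.zero] at this
  linear_combination -this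

lemma sub (h : IsCoeffRing l R C Tu gu ψ) (x y : R) (k : ℤ) : C k (x - y) = C k x - C k y := by
  rw [sub_eq_add_neg, h.add, h.neg, sub_eq_add_neg]

lemma alg_mul (h : IsCoeffRing l R C Tu gu ψ) (a : ℤ_[l]) (x : R) (k : ℤ) :
    C k (algebraMap ℤ_[l] R a * x) = a * C k x := by
  rw [h.mul, tsum_eq_single 0]
  · simp [h.alg]
  · intro i hi
    simp [h.alg, hi]

lemma natCast_mul (h : IsCoeffRing l R C Tu gu ψ) (x : R) (k : ℤ) :
    C k ((l : R) * x) = l * C k x := by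
  simpa using h.alg_mul (l : ℤ_[l]) x k

lemma one (h : IsCoeffRing l R C Tu gu ψ) (k : ℤ) : C k 1 = if k = 0 then 1 else 0 := by
  simpa using h.alg 1 k

lemma T_mul (h : IsCoeffRing l R C Tu gu ψ) (x : R) (k : ℤ) :
    C k ((Tu : R) * x) = C (k - 1) x := by
  rw [h.mul, tsum_eq_single 1]
  · simp [h.T]
  · intro i hi
    simp [h.T, hi]

lemma Tinv_mul (h : IsCoeffRing l R C Tu gu ψ) (x : R) (k : ℤ) :
    C k (((Tu⁻¹ : Rˣ) : R) * x) = C (k + 1) x := by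
  have := h.T_mul (((Tu⁻¹ : Rˣ) : R) * x) (k + 1)
  rw [Units.mul_inv_cancel_left] at this
  rw [this, add_sub_cancel_right]

lemma T_zpow_mul (h : IsCoeffRing l R C Tu gu ψ) (n : ℤ) (x : R) (k : ℤ) :
    C k (((Tu ^ n : Rˣ) : R) * x) = C (k - n) x := by
  induction n generalizing k with
  | zero => simp
  | succ n ih =>
    rw [zpow_add_one, mul_comm (Tu ^ (n : ℤ)), Units.val_mul, mul_assoc, h.T_mul, ih]
    congr 1; ring
  | pred n ih =>
    rw [zpow_sub_one, mul_comm (Tu ^ (-(n : ℤ))), Units.val_mul, mul_assoc, h.Tinv_mul, ih]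
    congr 1; ring

lemma T_zpow (h : IsCoeffRing l R C Tu gu ψ) (n k : ℤ) :
    C k ((Tu ^ n : Rˣ) : R) = if k = n then 1 else 0 := by
  have := h.T_zpow_mul n 1 k
  rw [mul_one, h.one] at this
  simp only [this, sub_eq_zero]

/-- An element all of whose coefficients are divisible by `l` is a multiple of `l`. -/
lemma exists_eq_mul (h : IsCoeffRing l R C Tu gu ψ) (x : R) (hx : ∀ k, (l : ℤ_[l]) ∣ C k x) :
    ∃ w, x = l * w := by
  choose f hf using hx
  have hn : ∀ k, ‖f k‖ = l * ‖C k x‖ := by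
    intro k
    rw [hf k, norm_mul, PadicInt.norm_p]
    have : (l : ℝ) ≠ 0 := by exact_mod_cast (Fact.out : Nat.Prime l).ne_zero
    field_simp
  obtain ⟨w, hw⟩ := h.surj f (by
    rw [tendsto_zero_iff_norm_tendsto_zero]
    simp only [hn]
    simpa using (tendsto_zero_iff_norm_tendsto_zero.1 (h.tend x)).const_mul (l : ℝ))
  refine ⟨w, h.ext _ _ fun k => ?_⟩
  rw [h.natCast_mul, hw, ← hf]

lemma mul_cancel (h : IsCoeffRing l R C Tu gu ψ) (x : R) (hx : (l : R) * x = 0) : x = 0 := by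
  refine h.ext _ _ fun k => ?_
  have := h.natCast_mul x k
  rw [hx, h.zero] at this
  have hl0 : (l : ℤ_[l]) ≠ 0 := by
    exact_mod_cast (Fact.out : Nat.Prime l).ne_zero
  rw [h.zero]
  exact (mul_eq_zero.1 this.symm).resolve_left hl0

/-! ### The reduction of `ψ` modulo `l` -/

/-- Elements of `Λ`, i.e. those with no negative coefficients, are closed under products. -/
lemma nonneg_mul (h : IsCoeffRing l R C Tu gu ψ) {x y : R} (hx : ∀ k < 0, C k x = 0)
    (hy : ∀ k < 0, C k y = 0) : ∀ k < 0, C k (x * y) = 0 := by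
  intro k hk
  rw [h.mul]
  refine (tsum_congr fun i => ?_).trans tsum_zero
  rcases lt_or_ge i 0 with hi | hi
  · rw [hx i hi, zero_mul]
  · rw [hy (k - i) (by omega), mul_zero]

lemma nonneg_pow (h : IsCoeffRing l R C Tu gu ψ) {x : R} (hx : ∀ k < 0, C k x = 0) (n : ℕ) :
    ∀ k < 0, C k (x ^ n) = 0 := by
  induction n with
  | zero => intro k hk; simp [h.one, hk.ne]
  | succ n ih => rw [pow_succ]; exact h.nonneg_mul ih hx

/-- `ψ(T) ^ m` vanishes to order at least `m`, because `ψ(T) = T · ∑_{i < l} (1 + T) ^ i`. -/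
lemma gu_pow_eq_zero (h : IsCoeffRing l R C Tu gu ψ) (m k : ℤ) (hm : 0 ≤ m) (hk : k < m) :
    C k ((gu ^ m : Rˣ) : R) = 0 := by
  obtain ⟨n, rfl⟩ := Int.eq_ofNat_of_zero_le hm
  have hv : ∀ j < 0, C j (∑ i ∈ Finset.range l, (1 + (Tu : R)) ^ i) = 0 := by
    have h1 : ∀ j < 0, C j (1 + (Tu : R)) = 0 := by
      intro j hj
      rw [h.add, h.one, h.T, if_neg (by omega), if_neg (by omega), add_zero]
    refine Finset.sum_induction _ (fun x => ∀ j < 0, C j x = 0) ?_ ?_ ?_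
    · intro x y hx hy j hj
      rw [h.add, hx j hj, hy j hj, add_zero]
    · intro j _
      exact h.zero j
    · intro i _
      exact h.nonneg_pow h1 i
  have hg : (gu : R) = (Tu : R) * ∑ i ∈ Finset.range l, (1 + (Tu : R)) ^ i := by
    rw [h.gu_eq, ← geom_sum_mul]; ring
  have hp := h.T_zpow_mul n ((∑ i ∈ Finset.range l, (1 + (Tu : R)) ^ i) ^ n) k
  rw [zpow_natCast, Units.val_pow_eq_pow_val, hg, mul_pow]
  rw [zpow_natCast, Units.val_pow_eq_pow_val] at hp
  rw [hp]
  exact h.nonneg_pow hv n _ (by simpa using hk)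

/-- `ψ(T) ^ m ≡ T ^ (l m)` modulo `l`, for every integer exponent `m`. -/
lemma gu_zpow_mod (h : IsCoeffRing l R C Tu gu ψ) (m k : ℤ) :
    (l : ℤ_[l]) ∣ C k ((gu ^ m : Rˣ) : R) - if k = l * m then 1 else 0 := by
  obtain ⟨r, hr⟩ := exists_add_pow_prime_eq (Fact.out : Nat.Prime l) (1 : R) (Tu : R)
  let q := Ideal.Quotient.mk (Ideal.span {(l : R)})
  have hu : Units.map q.toMonoidHom gu = Units.map q.toMonoidHom (Tu ^ (l : ℤ)) := by
    ext
    change q (gu : R) = q ((Tu ^ (l : ℤ) : Rˣ) : R)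
    rw [Ideal.Quotient.eq, Ideal.mem_span_singleton, h.gu_eq, hr]
    refine ⟨Tu * r, ?_⟩
    rw [zpow_natCast, Units.val_pow_eq_pow_val]
    ring
  have hm : q ((gu ^ m : Rˣ) : R) = q ((Tu ^ ((l : ℤ) * m) : Rˣ) : R) := by
    have := congrArg (fun u => ((u ^ m : (R ⧸ Ideal.span {(l : R)})ˣ) : R ⧸ Ideal.span {(l : R)})) hu
    simp only [← map_zpow, ← zpow_mul] at this
    exact this
  rw [Ideal.Quotient.eq, Ideal.mem_span_singleton] at hm
  obtain ⟨w, hw⟩ := hm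
  refine ⟨C k w, ?_⟩
  rw [← h.natCast_mul, ← hw, h.sub, h.T_zpow]

lemma summable_psi (h : IsCoeffRing l R C Tu gu ψ) (x : R) (k : ℤ) :
    Summable fun m : ℤ => C m x * C k ((gu ^ m : Rˣ) : R) := by
  refine NonarchimedeanAddGroup.summable_of_tendsto_cofinite_zero ?_
  rw [Int.cofinite_eq, tendsto_sup]
  constructor
  · refine squeeze_zero_norm (a := fun m => ‖C m x‖) (fun m => ?_)
      (tendsto_zero_iff_norm_tendsto_zero.1 (h.tend x))
    rw [norm_mul]
    exact mul_le_of_le_one_right (norm_nonneg _) (PadicInt.norm_le_one _)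
  · refine tendsto_const_nhds.congr' ?_
    filter_upwards [eventually_gt_atTop k, eventually_ge_atTop 0] with m hm hm0
    rw [h.gu_pow_eq_zero m k hm0 hm, mul_zero]

/-- `l ℤ_l` is closed, so an infinite sum of multiples of `l` is a multiple of `l`. -/
lemma dvd_tsum {f : ℤ → ℤ_[l]} (hf : ∀ m, (l : ℤ_[l]) ∣ f m) : (l : ℤ_[l]) ∣ ∑' m, f m := by
  have key : ∀ x : ℤ_[l], (l : ℤ_[l]) ∣ x ↔ ‖x‖ ≤ (l : ℝ) ^ (-((1 : ℕ) : ℤ)) := by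
    intro x
    rw [PadicInt.norm_le_pow_iff_mem_span_pow, pow_one, Ideal.mem_span_singleton]
  rw [key]
  exact IsUltrametricDist.norm_tsum_le_of_forall_le fun m => (key _).1 (hf m)

/-- `ψ x ≡ ∑ x_m T ^ (l m)` modulo `l`: coefficients at multiples of `l`. -/
lemma psi_mod_mul (h : IsCoeffRing l R C Tu gu ψ) (x : R) (j : ℤ) :
    (l : ℤ_[l]) ∣ C (l * j) (ψ x) - C j x := by
  have hl0 : l ≠ 0 := (Fact.out : Nat.Prime l).ne_zero
  have hs : HasSum (fun m : ℤ => C m x * if (l : ℤ) * j = l * m then 1 else 0) (C j x) := by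
    have := hasSum_single (f := fun m : ℤ => C m x * if (l : ℤ) * j = l * m then 1 else 0) j
      (fun m hm => by simp [hl0, hm.symm])
    simpa using this
  have hd := ((h.summable_psi x (l * j)).hasSum.sub hs).tsum_eq
  rw [h.psi, ← hd]
  refine dvd_tsum fun m => ?_
  rw [← mul_sub]
  exact (h.gu_zpow_mod m _).mul_left _

/-- `ψ x ≡ ∑ x_m T ^ (l m)` modulo `l`: coefficients away from multiples of `l`. -/
lemma psi_mod_not_dvd (h : IsCoeffRing l R C Tu gu ψ) (x : R) (k : ℤ) (hk : ¬ (l : ℤ) ∣ k) :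
    (l : ℤ_[l]) ∣ C k (ψ x) := by
  rw [h.psi]
  refine dvd_tsum fun m => ?_
  have := h.gu_zpow_mod m k
  rw [if_neg (fun e => hk ⟨m, e⟩), sub_zero] at this
  exact this.mul_left _

lemma psi_alg (h : IsCoeffRing l R C Tu gu ψ) (a : ℤ_[l]) :
    ψ (algebraMap ℤ_[l] R a) = algebraMap ℤ_[l] R a := by
  refine h.ext _ _ fun k => ?_
  rw [h.psi, tsum_eq_single 0]
  · simp [h.alg, h.one]
  · intro m hm
    simp [h.alg, hm]

/-! ### Exactness modulo `l` -/

/-- Far enough towards `-∞`, the coefficients are divisible by `l`. -/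
lemma exists_dvd (h : IsCoeffRing l R C Tu gu ψ) (x : R) :
    ∃ N : ℤ, ∀ k ≤ N, (l : ℤ_[l]) ∣ C k x := by
  have := (tendsto_zero_iff_norm_tendsto_zero.1 (h.tend x)).eventually
    (gt_mem_nhds (zero_lt_one))
  obtain ⟨N, hN⟩ := eventually_atBot.1 this
  exact ⟨N, fun k hk => (PadicInt.norm_lt_one_iff_dvd _).1 (hN k hk)⟩

/-- Modulo `l`, the relation `v + (1 - ψ) y = 0` with `v ∈ (Ξ ∩ Λ∧⁻) ⊕ ℤ_l` forces `v = 0` and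
`y` constant. -/
lemma ker_mod (h : IsCoeffRing l R C Tu gu ψ) (v y : R)
    (hv : ∀ k : ℤ, k ≠ 0 → ((l : ℤ) ∣ k ∨ 0 ≤ k) → C k v = 0)
    (hvy : v + (y - ψ y) = 0) :
    (∀ k, (l : ℤ_[l]) ∣ C k v) ∧ ∀ k ≠ 0, (l : ℤ_[l]) ∣ C k y := by
  have hl2 : (2 : ℤ) ≤ l := by exact_mod_cast (Fact.out : Nat.Prime l).two_le
  have hrel : ∀ k, C k v + (C k y - C k (ψ y)) = 0 := by
    intro k
    rw [← h.sub, ← h.add, hvy, h.zero]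
  have hpos : ∀ n : ℕ, 0 < n → (l : ℤ_[l]) ∣ C n y := by
    intro n
    induction n using Nat.strong_induction_on with
    | _ n ih =>
      intro hn
      have hr := hrel n
      rw [hv n (by omega) (Or.inr (by omega)), zero_add] at hr
      by_cases hd : (l : ℤ) ∣ n
      · obtain ⟨j, hj⟩ := hd
        have hj0 : 0 < j := by
          by_contra hj0
          nlinarith
        lift j to ℕ using hj0.le
        have hlt : j < n := by
          zify; nlinarith
        have h1 := ih j hlt (by exact_mod_cast hj0)
        have h2 := h.psi_mod_mul y j
        rw [← hj] at h2
        rw [sub_eq_zero.1 hr]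
        simpa using dvd_add h2 h1
      · rw [sub_eq_zero.1 hr]
        exact h.psi_mod_not_dvd y n hd
  obtain ⟨N, hN⟩ := h.exists_dvd y
  -- For `k < 0` the relation at `l k` reads `y_k ≡ y_{lk}`, and `y_k ≡ 0` for `k ≤ N`.
  have hneg : ∀ n : ℕ, ∀ k : ℤ, k < 0 → k ≤ N + n → (l : ℤ_[l]) ∣ C k y := by
    intro n
    induction n with
    | zero => intro k _ hk; exact hN k (by simpa using hk)
    | succ n ih =>
      intro k hk hkn
      have h1 := ih (l * k) (by nlinarith) (by push_cast at hkn; nlinarith)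
      have hr := hrel (l * k)
      rw [hv (l * k) (by nlinarith) (Or.inl ⟨k, rfl⟩), zero_add, sub_eq_zero] at hr
      have h2 := h.psi_mod_mul y k
      rw [← hr] at h2
      simpa using dvd_sub h1 h2
  have hy : ∀ k ≠ 0, (l : ℤ_[l]) ∣ C k y := by
    intro k hk
    rcases lt_or_gt_of_ne hk with hk | hk
    · exact hneg (k - N).toNat k hk (by omega)
    · lift k to ℕ using hk.le
      exact hpos k (by exact_mod_cast hk)
  refine ⟨fun k => ?_, hy⟩
  have hr : C k v = C k (ψ y) - C k y := by linear_combination hrel k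
  rw [hr]
  rcases eq_or_ne k 0 with rfl | hk
  · simpa using h.psi_mod_mul y 0
  · refine dvd_sub ?_ (hy k hk)
    by_cases hd : (l : ℤ) ∣ k
    · obtain ⟨j, rfl⟩ := hd
      have hj : j ≠ 0 := by rintro rfl; simp at hk
      simpa using dvd_add (h.psi_mod_mul y j) (hy j hj)
    · exact h.psi_mod_not_dvd y k hd

/-- The solution on positive indices of `y_n = b_n + y_{n/l}` (with `y_{n/l}` read as `0` when
`l ∤ n`). -/
noncomputable def posSol {A : Type*} [AddCommGroup A] (l : ℕ) (b : ℤ → A) (n : ℕ) : A :=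
  b n + if h : 1 < l ∧ 0 < n ∧ l ∣ n then posSol l b (n / l) else 0
termination_by n
decreasing_by exact Nat.div_lt_self h.2.1 h.1

/-- The solution `y_{-n} = negSol l N b n` on negative indices of `y_k = y_{lk} - b_{lk}` for
`-N < k < 0`, cut off to `y_k = 0` for `k ≤ -N`. -/
noncomputable def negSol {A : Type*} [AddCommGroup A] (l N : ℕ) (b : ℤ → A) (n : ℕ) : A :=
  if h : 1 < l ∧ 0 < n ∧ n < N then negSol l N b (l * n) - b (-(l * n : ℕ)) else 0
termination_by N - n
decreasing_by
  have : 2 * n ≤ l * n := Nat.mul_le_mul_right n h.1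
  omega

/-- Modulo `l`, every `z` lies in `(Ξ ∩ Λ∧⁻) ⊕ ℤ_l + (1 - ψ) Λ∧`. -/
lemma surj_mod (h : IsCoeffRing l R C Tu gu ψ) (z : R) :
    ∃ v y w : R, (∀ k : ℤ, k ≠ 0 → ((l : ℤ) ∣ k ∨ 0 ≤ k) → C k v = 0) ∧
      z = v + (y - ψ y) + l * w := by
  have hl1 : 1 < l := (Fact.out : Nat.Prime l).one_lt
  have hl2 : (2 : ℤ) ≤ l := by exact_mod_cast hl1
  obtain ⟨N₀, hN₀⟩ := h.exists_dvd z
  obtain ⟨N, hN⟩ : ∃ N : ℕ, ∀ k : ℤ, k ≤ -(N : ℤ) → (l : ℤ_[l]) ∣ C k z :=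
    ⟨(-N₀).toNat, fun k hk => hN₀ k (by omega)⟩
  let b : ℤ → ℤ_[l] := fun k => C k z
  let f : ℤ → ℤ_[l] := fun k =>
    if 0 < k then posSol l b k.toNat else if k < 0 then negSol l N b (-k).toNat else 0
  have hf0 : ∀ k : ℤ, k ≤ -(N : ℤ) → f k = 0 := by
    intro k hk
    have h1 : ¬ 0 < k := by omega
    simp only [f, if_neg h1]
    split_ifs with h2
    · rw [negSol, dif_neg (by omega)]
    · rfl
  obtain ⟨y, hy⟩ := h.surj f (tendsto_const_nhds.congr' (by
    filter_upwards [eventually_le_atBot (-(N : ℤ))] with k hk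
    exact (hf0 k hk).symm))
  let g : ℤ → ℤ_[l] := fun k =>
    if k = 0 then C 0 z else if ((l : ℤ) ∣ k ∨ 0 ≤ k) ∨ k ≤ -(N : ℤ) then 0 else C k z - f k
  obtain ⟨v, hv⟩ := h.surj g (tendsto_const_nhds.congr' (by
    filter_upwards [eventually_le_atBot (-(N : ℤ)), eventually_lt_atBot 0] with k hk hk0
    simp [g, hk0.ne, hk]))
  have hdvd : ∀ k, (l : ℤ_[l]) ∣ C k (z - (v + (y - ψ y))) := by
    intro k
    rw [h.sub, h.add, h.sub, hv, hy]
    rcases lt_trichotomy k 0 with hk | rfl | hk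
    · by_cases hd : (l : ℤ) ∣ k
      · obtain ⟨j, rfl⟩ := hd
        have hj : j < 0 := by by_contra hj; nlinarith
        have hg : g (l * j) = 0 := by simp [g, hk.ne]
        have hp := h.psi_mod_mul y j
        rw [hy] at hp
        have hrec : (l : ℤ_[l]) ∣ C (l * j) z - f (l * j) + f j := by
          rcases le_or_gt j (-(N : ℤ)) with hjN | hjN
          · rw [hf0 j hjN, hf0 (l * j) (by nlinarith)]
            simpa using hN (l * j) (by nlinarith)
          · have hfj : f j = f (l * j) - C (l * j) z := by
              have e1 : ¬ 0 < j := by omega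
              have e2 : ¬ 0 < (l : ℤ) * j := by omega
              simp only [f, if_neg e1, if_neg e2, if_pos hj, if_pos hk]
              rw [negSol, dif_pos (by omega)]
              have e3 : (-((l : ℤ) * j)).toNat = l * (-j).toNat := by
                zify
                rw [Int.toNat_of_nonneg (by omega), Int.toNat_of_nonneg (by omega)]
                ring
              rw [e3]
              congr 2
              push_cast
              rw [Int.toNat_of_nonneg (by omega)]
              ring
            rw [hfj]; simp
        rw [hg]
        convert dvd_add hrec hp using 1
        ring
      · have hp := h.psi_mod_not_dvd y k hd
        by_cases hkN : k ≤ -(N : ℤ)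
        · have hg : g k = 0 := by simp [g, hk.ne, hkN]
          rw [hg, hf0 k hkN]
          convert dvd_add (hN k hkN) hp using 1
          ring
        · have hg : g k = C k z - f k := by
            simp only [g, if_neg hk.ne]
            rw [if_neg (by push Not; exact ⟨⟨hd, hk⟩, by omega⟩)]
          rw [hg]
          convert hp using 1
          ring
    · have hg : g 0 = C 0 z := by simp [g]
      have hp := h.psi_mod_mul y 0
      rw [hg, ← hy]
      simpa using hp
    · have hg : g k = 0 := by simp [g, hk.ne', hk.le]
      rw [hg]
      have hfk : f k = C k z + if (l : ℤ) ∣ k then f (k / l) else 0 := by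
        simp only [f, if_pos hk]
        rw [posSol]
        have e1 : ((k.toNat : ℕ) : ℤ) = k := Int.toNat_of_nonneg hk.le
        have e2 : l ∣ k.toNat ↔ (l : ℤ) ∣ k := by
          rw [← Int.natCast_dvd_natCast, e1]
        by_cases hd : (l : ℤ) ∣ k
        · rw [dif_pos ⟨hl1, by omega, e2.2 hd⟩, if_pos hd, e1]
          have e3 : 0 < k / l := Int.ediv_pos_of_pos_of_dvd hk (by omega) hd
          rw [if_pos e3]
          congr 2
          zify
          rw [Int.toNat_of_nonneg e3.le, e1]
        · rw [dif_neg (fun e => hd (e2.1 e.2.2)), if_neg hd, e1]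
      rw [hfk]
      by_cases hd : (l : ℤ) ∣ k
      · rw [if_pos hd]
        obtain ⟨j, rfl⟩ := hd
        have hp := h.psi_mod_mul y j
        rw [hy] at hp
        rw [Int.mul_ediv_cancel_left _ (by omega)]
        convert hp using 1
        ring
      · rw [if_neg hd]
        convert h.psi_mod_not_dvd y k hd using 1
        ring
  obtain ⟨w, hw⟩ := h.exists_eq_mul _ hdvd
  refine ⟨v, y, w, fun k hk hk' => ?_, ?_⟩
  · rw [hv]
    simp only [g, if_neg hk, if_pos (Or.inl hk' : _ ∨ k ≤ -(N : ℤ))]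
  · rw [← hw]; ring

/-! ### Lifting to `Λ∧` -/

/-- An `l`-power-divisible `l`-adic integer is zero. -/
lemma eq_zero_of_dvd (x : ℤ_[l]) (hx : ∀ n : ℕ, (l : ℤ_[l]) ^ n ∣ x) : x = 0 := by
  by_contra h0
  have h1 : ∀ n : ℕ, ‖x‖ ≤ ((l : ℝ)⁻¹) ^ n := by
    intro n
    have := (PadicInt.norm_le_pow_iff_mem_span_pow x n).2 (Ideal.mem_span_singleton.2 (hx n))
    simpa using this
  have hl1 : (1 : ℝ) < l := by exact_mod_cast (Fact.out : Nat.Prime l).one_lt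
  obtain ⟨n, hn⟩ := exists_pow_lt_of_lt_one (norm_pos_iff.2 h0) (inv_lt_one_of_one_lt₀ hl1)
  exact absurd (h1 n) (not_le.2 hn)

/-- Infinite sums `S u = ∑ l ^ i u_i` exist in `R`; they are recorded through the recursion
`S u = u_0 + l S (u_{· + 1})`. -/
lemma exists_sum (h : IsCoeffRing l R C Tu gu ψ) :
    ∃ S : (ℕ → R) → R, (∀ u, S u = u 0 + l * S (fun i => u (i + 1))) ∧
      ∀ u k, (∀ i, C k (u i) = 0) → C k (S u) = 0 := by
  have hl1 : (1 : ℝ) < l := by exact_mod_cast (Fact.out : Nat.Prime l).one_lt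
  have hgeom : Summable fun i : ℕ => ((l : ℝ)⁻¹) ^ i :=
    summable_geometric_of_lt_one (by positivity) (inv_lt_one_of_one_lt₀ hl1)
  have hb : ∀ (i : ℕ) (a : ℤ_[l]), ‖(l : ℤ_[l]) ^ i * a‖ ≤ ((l : ℝ)⁻¹) ^ i := by
    intro i a
    rw [norm_mul, norm_pow, PadicInt.norm_p]
    exact mul_le_of_le_one_right (by positivity) (PadicInt.norm_le_one _)
  have hex : ∀ u : ℕ → R, ∃ s : R, ∀ k, C k s = ∑' i : ℕ, (l : ℤ_[l]) ^ i * C k (u i) := by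
    intro u
    apply h.surj
    have := tendsto_tsum_of_dominated_convergence (𝓕 := atBot)
      (f := fun (k : ℤ) (i : ℕ) => (l : ℤ_[l]) ^ i * C k (u i)) (g := fun _ => 0)
      hgeom (fun i => by simpa using (h.tend (u i)).const_mul ((l : ℤ_[l]) ^ i))
      (Eventually.of_forall fun k i => hb i _)
    simpa using this
  choose S hS using hex
  refine ⟨S, fun u => h.ext _ _ fun k => ?_, fun u k hu => ?_⟩
  · rw [h.add, h.natCast_mul, hS, hS,
      (Summable.of_norm_bounded hgeom fun i => hb i (C k (u i))).tsum_eq_zero_add,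
      ← (Summable.of_norm_bounded hgeom fun i => hb i (C k (u (i + 1)))).tsum_mul_left]
    simp only [pow_zero, one_mul, pow_succ']
    simp only [mul_assoc]
  · rw [hS]
    simp [hu]

/-- The relation `v + (1 - ψ) y = 0` with `v ∈ (Ξ ∩ Λ∧⁻) ⊕ ℤ_l` forces `v` and the
non-constant part of `y` to be divisible by every power of `l`. -/
lemma ker_pow (h : IsCoeffRing l R C Tu gu ψ) (n : ℕ) : ∀ (v y : R),
    (∀ k : ℤ, k ≠ 0 → ((l : ℤ) ∣ k ∨ 0 ≤ k) → C k v = 0) → v + (y - ψ y) = 0 →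
    (∀ k, (l : ℤ_[l]) ^ n ∣ C k v) ∧ ∀ k ≠ 0, (l : ℤ_[l]) ^ n ∣ C k y := by
  induction n with
  | zero => intro v y _ _; simp
  | succ n ih =>
    intro v y hv hvy
    obtain ⟨h1, h2⟩ := h.ker_mod v y hv hvy
    obtain ⟨v', rfl⟩ := h.exists_eq_mul v h1
    -- Removing the constant term of `y` does not affect `y - ψ y`.
    obtain ⟨y', hy'⟩ := h.exists_eq_mul (y - algebraMap ℤ_[l] R (C 0 y)) (by
      intro k
      rw [h.sub, h.alg]
      rcases eq_or_ne k 0 with rfl | hk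
      · simp
      · simpa [hk] using h2 k hk)
    have hl0 : (l : ℤ_[l]) ≠ 0 := by
      exact_mod_cast (Fact.out : Nat.Prime l).ne_zero
    have hye : y = l * y' + algebraMap ℤ_[l] R (C 0 y) := by rw [← hy']; ring
    have hrel : v' + (y' - ψ y') = 0 := by
      apply h.mul_cancel
      rw [hye, map_add, map_mul, map_natCast, h.psi_alg] at hvy
      linear_combination hvy
    obtain ⟨h3, h4⟩ := ih v' y' (fun k hk hk' => by
      have := hv k hk hk'
      rw [h.natCast_mul] at this
      exact (mul_eq_zero.1 this).resolve_left hl0) hrel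
    refine ⟨fun k => ?_, fun k hk => ?_⟩
    · rw [h.natCast_mul, pow_succ']
      exact mul_dvd_mul_left _ (h3 k)
    · rw [hye, h.add, h.alg, if_neg hk, add_zero, h.natCast_mul, pow_succ']
      exact mul_dvd_mul_left _ (h4 k hk)

lemma ker_eq (h : IsCoeffRing l R C Tu gu ψ) (v y : R)
    (hv : ∀ k : ℤ, k ≠ 0 → ((l : ℤ) ∣ k ∨ 0 ≤ k) → C k v = 0) (hvy : v + (y - ψ y) = 0) :
    v = 0 ∧ y = algebraMap ℤ_[l] R (C 0 y) := by
  constructor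
  · refine h.ext _ _ fun k => ?_
    rw [h.zero]
    exact eq_zero_of_dvd _ fun n => (h.ker_pow n v y hv hvy).1 k
  · refine h.ext _ _ fun k => ?_
    rw [h.alg]
    split_ifs with hk
    · rw [hk]
    · exact eq_zero_of_dvd _ fun n => (h.ker_pow n v y hv hvy).2 k hk

lemma surj_eq (h : IsCoeffRing l R C Tu gu ψ) (z : R) :
    ∃ v y : R, (∀ k : ℤ, k ≠ 0 → ((l : ℤ) ∣ k ∨ 0 ≤ k) → C k v = 0) ∧ z = v + (y - ψ y) := by
  choose V Y W hV hW using h.surj_mod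
  obtain ⟨S, hS, hS0⟩ := h.exists_sum
  let v : R → R := fun z => S fun i => V (W^[i] z)
  let y : R → R := fun z => S fun i => Y (W^[i] z)
  have hv : ∀ z, v z = V z + l * v (W z) := fun z => hS _
  have hy : ∀ z, y z = Y z + l * y (W z) := fun z => hS _
  -- The error `z - v - (1 - ψ) y` satisfies `err z = l * err (W z)`, so it vanishes.
  have herr : ∀ (n : ℕ) (z : R) (k : ℤ),
      (l : ℤ_[l]) ^ n ∣ C k (z - (v z + (y z - ψ (y z)))) := by
    intro n
    induction n with
    | zero => intro z k; simp
    | succ n ih =>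
      intro z k
      have : z - (v z + (y z - ψ (y z))) =
          l * (W z - (v (W z) + (y (W z) - ψ (y (W z))))) := by
        rw [hv z, hy z, map_add, map_mul, map_natCast]
        linear_combination hW z
      rw [this, h.natCast_mul, pow_succ']
      exact mul_dvd_mul_left _ (ih _ _)
  refine ⟨v z, y z, fun k hk hk' => hS0 _ _ fun i => hV _ k hk hk', ?_⟩
  refine sub_eq_zero.1 (h.ext _ _ fun k => ?_)
  rw [h.zero]
  exact eq_zero_of_dvd _ fun n => herr n z k

end IsCoeffRing

/-- **Lemma 3.**  The sequence
`0 → ℤ_l → Λ∧ →(1−ψ)→ Λ∧ → (Ξ/Ξ₁) ⊕ ℤ_l → 0` is exact:  `ℤ_l → Λ∧` is injective,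
the kernel of `1 − ψ` is exactly the constants `ℤ_l`, and the map
`(Ξ ∩ Λ∧⁻) ⊕ ℤ_l → Λ∧/(1−ψ)Λ∧`, `(x, c) ↦ x + c mod (1−ψ)Λ∧`, is an isomorphism
onto the cokernel of `1 − ψ` (note `Ξ/Ξ₁ ≅ Ξ ∩ Λ∧⁻`). -/
theorem statement16 (l : ℕ) [Fact (Nat.Prime l)] (hl : Odd l)
    -- `R` is the ring `Λ∧ = ℤ_l{{T}}`, the `l`-adic completion of the localization
    -- of `Λ = ℤ_l[[T]]` at the prime ideal `lΛ`, described concretely through its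
    -- coefficient functions `C k : Λ∧ → ℤ_l` (`x = ∑_{k ∈ ℤ} (C k x)·T^k`,
    -- `C k x → 0` l-adically as `k → −∞`).
    (R : Type) [CommRing R] [Algebra ℤ_[l] R]
    (C : ℤ → R → ℤ_[l]) (Tu gu : Rˣ) (ψ : R →+* R)
    (hext : ∀ x y : R, (∀ k, C k x = C k y) → x = y)
    (hsurj : ∀ f : ℤ → ℤ_[l], Tendsto f atBot (nhds 0) → ∃ x : R, ∀ k, C k x = f k)
    (htend : ∀ x : R, Tendsto (fun k => C k x) atBot (nhds 0))
    (hadd : ∀ x y : R, ∀ k, C k (x + y) = C k x + C k y)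
    (hmul : ∀ x y : R, ∀ k, C k (x * y) = ∑' i : ℤ, C i x * C (k - i) y)
    (halg : ∀ (a : ℤ_[l]) (k : ℤ),
      C k (algebraMap ℤ_[l] R a) = if k = 0 then a else 0)
    (hT : ∀ k, C k (Tu : R) = if k = 1 then 1 else 0)
    (hgu : (gu : R) = (1 + (Tu : R)) ^ l - 1)
    (hψ : ∀ (x : R) (k : ℤ),
      C k (ψ x) = ∑' m : ℤ, C m x * C k ((gu ^ m : Rˣ) : R)) :
    -- ℤ_l → Λ∧ is injective
    Function.Injective (algebraMap ℤ_[l] R) ∧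
    -- the kernel of 1 − ψ is exactly the constants ℤ_l
    {x : R | x - ψ x = 0} = Set.range (algebraMap ℤ_[l] R) ∧
    -- (x, c) ↦ class of x + c is injective on (Ξ ∩ Λ∧⁻) ⊕ ℤ_l modulo (1−ψ)Λ∧ ...
    (∀ (x x' : R) (c c' : ℤ_[l]),
      (∀ k : ℤ, ((l : ℤ) ∣ k ∨ 0 ≤ k) → C k x = 0) →
      (∀ k : ℤ, ((l : ℤ) ∣ k ∨ 0 ≤ k) → C k x' = 0) →
      ((x + algebraMap ℤ_[l] R c) - (x' + algebraMap ℤ_[l] R c') ∈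
        Set.range (fun y : R => y - ψ y)) →
      x = x' ∧ c = c') ∧
    -- ... and surjective onto the cokernel of 1 − ψ
    (∀ z : R, ∃ (x : R) (c : ℤ_[l]) (y : R),
      (∀ k : ℤ, ((l : ℤ) ∣ k ∨ 0 ≤ k) → C k x = 0) ∧
      z = x + algebraMap ℤ_[l] R c + (y - ψ y)) := by
  have h : IsCoeffRing l R C Tu gu ψ := ⟨hext, hsurj, htend, hadd, hmul, halg, hT, hgu, hψ⟩
  have hinj : Function.Injective (algebraMap ℤ_[l] R) := by
    intro a b hab
    have := congrArg (C 0) hab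
    simpa [h.alg] using this
  refine ⟨hinj, ?_, ?_, ?_⟩
  · ext x
    constructor
    · intro hx
      have := h.ker_eq 0 x (fun k _ _ => h.zero k) (by simpa using hx)
      exact ⟨_, this.2.symm⟩
    · rintro ⟨a, rfl⟩
      simp [h.psi_alg]
  · rintro x x' c c' hx hx' ⟨y, hy⟩
    have hv := (h.ker_eq ((x + algebraMap ℤ_[l] R c) - (x' + algebraMap ℤ_[l] R c')) (-y)
      (fun k hk hk' => by
        rw [h.sub, h.add, h.add, h.alg, h.alg, hx k hk', hx' k hk', if_neg hk, if_neg hk]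
        ring)
      (by rw [← hy, map_neg]; ring)).1
    have hc : c = c' := by
      have := congrArg (C 0) hv
      rw [h.sub, h.add, h.add, h.alg, h.alg, hx 0 (Or.inr le_rfl), hx' 0 (Or.inr le_rfl), h.zero,
        if_pos rfl, if_pos rfl] at this
      linear_combination this
    subst hc
    exact ⟨by linear_combination hv, rfl⟩
  · intro z
    obtain ⟨v, y, hv, hz⟩ := h.surj_eq z
    refine ⟨v - algebraMap ℤ_[l] R (C 0 v), C 0 v, y, fun k hk => ?_, ?_⟩
    · rw [h.sub, h.alg]
      rcases eq_or_ne k 0 with rfl | hk0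
      · simp
      · rw [if_neg hk0, hv k hk0 hk, sub_zero]
    · rw [sub_add_cancel]
      exact hz
end
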